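/- Let p₀,p₁,p₂,p₃ ∈ ℝ³ span a simplex S with edge lengths y₁ = |p₀−p₁|, y₂ = |p₀−p₂|, y₃ = |p₀−p₃|, y₄ = |p₂−p₃|, y₅ = |p₁−p₃|, y₆ = |p₁−p₂| satisfying y₁ ∈ [2√2 − 0.001, 2√2] and yᵢ ∈ [2, 2.001] for i = 2,…,6 (i.e., all edge lengths lie within 0.001 of those of S₀ = S(2√2,2,2,2,2,2)). Then Γ(S) ≤ 0, with equality if and only if y₁ = 2√2 and y₂ = y₃ = y₄ = y₅ = y₆ = 2. -/

import Mathlib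

open MeasureTheory Real

noncomputable section

abbrev E3 : Type := EuclideanSpace ℝ (Fin 3)

/-- The density of the regular octahedron. -/
def δoct : ℝ := (-3 * π + 12 * arccos (1 / Real.sqrt 3)) / Real.sqrt 8

/-- The compression `Γ(S)` of the simplex `S = conv {p₀, p₁, p₂, p₃}`:
`Γ(S) = -δ_oct · vol S + vol (S ∩ (B(p₀,1) ∪ B(p₁,1) ∪ B(p₂,1) ∪ B(p₃,1)))`. -/
def Gamma (p₀ p₁ p₂ p₃ : E3) : ℝ :=
  -δoct * (volume (convexHull ℝ ({p₀, p₁, p₂, p₃} : Set E3))).toReal +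
    (volume (convexHull ℝ ({p₀, p₁, p₂, p₃} : Set E3) ∩
      (Metric.closedBall p₀ 1 ∪ Metric.closedBall p₁ 1 ∪ Metric.closedBall p₂ 1 ∪
        Metric.closedBall p₃ 1))).toReal

/-!
Inside `S` the ball at a vertex `p` lies in the sector that the three facets through `p` cut from
it, so `Γ(S)` is at most the total volume of the four sectors minus `δ_oct · vol S`. By Girard's
formula the sector volumes are determined by the dihedral angles, and the angles and `vol S` are
explicit functions of the squared edge lengths. At `S₀` the two contributions cancel, and the first
order expansion there is strictly negative in every direction that shortens the long edge or
lengthens a short one; its coefficients dominate the quadratic remainders on the neighborhood.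
At `S₀` itself `Γ` equals the bound, because the balls do not overlap and no altitude is shorter
than `1`.
-/

open Metric InnerProductGeometry
open scoped ENNReal

section Wedge

lemma lintegral_radial_planar_sector {G : ℝ → ℝ≥0∞} (hG : Measurable G) {T : Set (ℝ × ℝ)}
    {J : Set ℝ} (hT : MeasurableSet T) (hJ : MeasurableSet J) (hJπ : J ⊆ Set.Ioo (-π) π)
    (h : ∀ r > 0, ∀ θ ∈ Set.Ioo (-π) π, (r * cos θ, r * sin θ) ∈ T ↔ θ ∈ J) :
    ∫⁻ p in T, G (p.1 ^ 2 + p.2 ^ 2) =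
      (∫⁻ r in Set.Ioi (0 : ℝ), ENNReal.ofReal r * G (r ^ 2)) * volume J := by
  have hpolar : ∀ p ∈ polarCoord.target,
      ENNReal.ofReal p.1 • T.indicator (fun q ↦ G (q.1 ^ 2 + q.2 ^ 2)) (polarCoord.symm p) =
        ENNReal.ofReal p.1 * G (p.1 ^ 2) * J.indicator 1 p.2 := by
    rintro ⟨r, θ⟩ ⟨hr, hθ⟩
    have hsq : (r * cos θ) ^ 2 + (r * sin θ) ^ 2 = r ^ 2 := by
      linear_combination r ^ 2 * sin_sq_add_cos_sq θ
    by_cases hθJ : θ ∈ J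
    · simp [(h r hr θ hθ).2 hθJ, hθJ, hsq]
    · simp [mt (h r hr θ hθ).1 hθJ, hθJ]
  rw [← lintegral_indicator hT, ← lintegral_comp_polarCoord_symm,
    setLIntegral_congr_fun polarCoord.open_target.measurableSet hpolar, polarCoord_target,
    Measure.volume_eq_prod, ← Measure.prod_restrict,
    lintegral_prod_mul (f := fun r ↦ ENNReal.ofReal r * G (r ^ 2)) (by fun_prop)
      (measurable_one.indicator hJ).aemeasurable,
    lintegral_indicator_one hJ, Measure.restrict_apply hJ, Set.inter_eq_left.2 hJπ]

lemma measurePreserving_coords :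
    MeasurePreserving fun x : E3 ↦ ((x 0, x 1), x 2) :=
  Measure.measurePreserving_swap.comp <|
    ((MeasurePreserving.id volume).prod (volume_preserving_piFinTwo fun _ : Fin 2 ↦ ℝ)).comp <|
      (volume_preserving_piFinSuccAbove (fun _ : Fin 3 ↦ ℝ) 2).comp
        (PiLp.volume_preserving_ofLp (Fin 3))

lemma mem_closedBall_zero_one_iff (x : E3) :
    x ∈ closedBall (0 : E3) 1 ↔ x 0 ^ 2 + x 1 ^ 2 + x 2 ^ 2 ≤ 1 := by
  rw [mem_closedBall_zero_iff, ← sq_le_one_iff₀ (norm_nonneg x), EuclideanSpace.norm_sq_eq]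
  simp [Fin.sum_univ_three]

/-- The length of the vertical chord of the unit ball of `ℝ³` at squared distance `s` from the
vertical axis. -/
def chordLength (s : ℝ) : ℝ≥0∞ := volume {z : ℝ | s + z ^ 2 ≤ 1}

lemma measurable_chordLength : Measurable chordLength :=
  measurable_measure_prodMk_left (s := {q : ℝ × ℝ | q.1 + q.2 ^ 2 ≤ 1})
    (measurableSet_le (by fun_prop) (by fun_prop))

lemma volume_closedBall_inter_eq_lintegral_chordLength {T : Set (ℝ × ℝ)} (hT : MeasurableSet T) :
    volume (closedBall (0 : E3) 1 ∩ {x | (x 0, x 1) ∈ T}) =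
      ∫⁻ p in T, chordLength (p.1 ^ 2 + p.2 ^ 2) := by
  set C := {q : (ℝ × ℝ) × ℝ | q.1.1 ^ 2 + q.1.2 ^ 2 + q.2 ^ 2 ≤ 1} ∩ Prod.fst ⁻¹' T with hC
  have hCm : MeasurableSet C :=
    (measurableSet_le (by fun_prop) (by fun_prop)).inter (measurable_fst hT)
  have hpre : closedBall (0 : E3) 1 ∩ {x | (x 0, x 1) ∈ T} =
      (fun x : E3 ↦ ((x 0, x 1), x 2)) ⁻¹' C :=
    Set.ext fun x ↦ and_congr_left' (mem_closedBall_zero_one_iff x)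
  rw [hpre, measurePreserving_coords.measure_preimage hCm.nullMeasurableSet,
    Measure.volume_eq_prod, Measure.prod_apply hCm, ← lintegral_indicator hT]
  refine lintegral_congr fun p ↦ ?_
  by_cases hp : p ∈ T <;> simp [hC, hp, chordLength, Set.preimage, Set.inter_def]

lemma volume_closedBall_inter_sector {T : Set (ℝ × ℝ)} {J : Set ℝ} (hT : MeasurableSet T)
    (hJ : MeasurableSet J) (hJπ : J ⊆ Set.Ioo (-π) π)
    (h : ∀ r > 0, ∀ θ ∈ Set.Ioo (-π) π, (r * cos θ, r * sin θ) ∈ T ↔ θ ∈ J) :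
    volume (closedBall (0 : E3) 1 ∩ {x | (x 0, x 1) ∈ T}) =
      ENNReal.ofReal (2 / 3) * volume J := by
  have hint : ∫⁻ r in Set.Ioi (0 : ℝ), ENNReal.ofReal r * chordLength (r ^ 2) =
      ENNReal.ofReal (2 / 3) := by
    -- The full disc has the same radial factor, so it is read off the volume of the ball.
    have hball := (volume_closedBall_inter_eq_lintegral_chordLength MeasurableSet.univ).trans
      (lintegral_radial_planar_sector measurable_chordLength MeasurableSet.univ
        measurableSet_Ioo subset_rfl fun _ _ _ hθ ↦ iff_of_true trivial hθ)
    have hvol : volume (closedBall (0 : E3) 1) =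
        ENNReal.ofReal (2 / 3) * volume (Set.Ioo (-π) π) := by
      rw [EuclideanSpace.volume_closedBall_fin_three, Real.volume_Ioo,
        ← ENNReal.ofReal_mul (by norm_num)]
      rw [ENNReal.ofReal_one, one_pow, one_mul]
      ring_nf
    simp only [Set.mem_univ, Set.ofPred_true, Set.inter_univ] at hball
    refine (ENNReal.mul_left_inj ?_ ?_).1 (hball.symm.trans hvol) <;> simp [pi_pos]
  rw [volume_closedBall_inter_eq_lintegral_chordLength hT,
    lintegral_radial_planar_sector measurable_chordLength hT hJ hJπ h, hint]

lemma cos_pos_iff_abs_lt_pi_div_two {θ : ℝ} (h : |θ| < 3 * π / 2) : 0 < cos θ ↔ |θ| < π / 2 := by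
  rw [← cos_abs]
  refine ⟨fun hcos ↦ ?_, fun hlt ↦ cos_pos_of_mem_Ioo ⟨by linarith [abs_nonneg θ, pi_pos], hlt⟩⟩
  by_contra! hle
  exact hcos.not_ge (cos_nonpos_of_pi_div_two_le_of_le hle (by linarith))

lemma volume_real_closedBall_inter_planar_wedge {ψ : ℝ} (hψ : |ψ| ≤ π) :
    volume.real (closedBall (0 : E3) 1 ∩ ({x | 0 < x 0} ∩ {x | 0 < x 0 * cos ψ + x 1 * sin ψ})) =
      2 / 3 * (π - |ψ|) := by
  set J := Set.Ioo (-(π / 2)) (π / 2) ∩ Set.Ioo (ψ - π / 2) (ψ + π / 2) with hJ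
  have hwedge : volume (closedBall (0 : E3) 1 ∩ {x | (x 0, x 1) ∈
      {p : ℝ × ℝ | 0 < p.1} ∩ {p | 0 < p.1 * cos ψ + p.2 * sin ψ}}) =
      ENNReal.ofReal (2 / 3) * volume J := by
    refine volume_closedBall_inter_sector
      ((measurableSet_lt (by fun_prop) (by fun_prop)).inter
        (measurableSet_lt (by fun_prop) (by fun_prop)))
      (measurableSet_Ioo.inter measurableSet_Ioo)
      (fun θ hθ ↦ ⟨by linarith [hθ.1.1, pi_pos], by linarith [hθ.1.2, pi_pos]⟩)
      fun r hr θ hθ ↦ ?_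
    have hrot : r * cos θ * cos ψ + r * sin θ * sin ψ = r * cos (θ - ψ) := by
      rw [cos_sub]; ring
    have hθJ : θ ∈ J ↔ |θ| < π / 2 ∧ |θ - ψ| < π / 2 := by
      rw [hJ, Set.mem_inter_iff, Set.mem_Ioo, Set.mem_Ioo, abs_lt, abs_sub_lt_iff]
      constructor <;> rintro ⟨⟨_, _⟩, _, _⟩ <;> refine ⟨⟨?_, ?_⟩, ?_, ?_⟩ <;> linarith
    have hθ3 : |θ| < 3 * π / 2 := (abs_lt.2 hθ).trans (by linarith [pi_pos])
    simp only [Set.mem_inter_iff, Set.mem_ofPred_eq, hrot, mul_pos_iff_of_pos_left hr, hθJ,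
      cos_pos_iff_abs_lt_pi_div_two hθ3]
    refine and_congr_right fun hθ2 ↦ cos_pos_iff_abs_lt_pi_div_two ?_
    linarith [abs_sub θ ψ]
  have hlen : volume J = ENNReal.ofReal (π - |ψ|) := by
    rw [hJ, Set.Ioo_inter_Ioo, Real.volume_Ioo]
    congr 1
    rcases abs_cases ψ with ⟨hab, hs⟩ | ⟨hab, hs⟩ <;> rw [hab]
    · rw [sup_of_le_right (by linarith), inf_of_le_left (by linarith)]; ring
    · rw [sup_of_le_left (by linarith), inf_of_le_right (by linarith)]; ring
  rw [hlen, ← ENNReal.ofReal_mul (by norm_num)] at hwedge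
  exact (congrArg ENNReal.toReal hwedge).trans
    (ENNReal.toReal_ofReal (mul_nonneg (by norm_num) (sub_nonneg.2 hψ)))

end Wedge

section HalfSpaces

variable {E : Type*} [NormedAddCommGroup E] [InnerProductSpace ℝ E]

/-- The closed half-space with inner normal `n` through the origin. It is all of `E` if `n = 0`. -/
def halfSpace (n : E) : Set E := {x | 0 ≤ inner ℝ n x}

lemma neg_preimage_halfSpace (n : E) : Neg.neg ⁻¹' halfSpace n = {x | inner ℝ n x ≤ 0} := by
  ext x
  simp [halfSpace]

variable [FiniteDimensional ℝ E] [MeasurableSpace E] [BorelSpace E]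

lemma measurableSet_halfSpace (n : E) : MeasurableSet (halfSpace n) :=
  measurableSet_le (by fun_prop) (by fun_prop)

lemma halfSpace_ae_eq {n : E} (hn : n ≠ 0) :
    halfSpace n =ᵐ[volume] {x | 0 < inner ℝ n x} := by
  have hker : volume {x : E | inner ℝ n x = 0} = 0 :=
    Measure.addHaar_submodule volume (LinearMap.ker (innerₛₗ ℝ n)) fun htop ↦
      hn (inner_self_eq_zero.1 (LinearMap.mem_ker.1 (htop ▸ Submodule.mem_top : n ∈ _)))
  filter_upwards [compl_mem_ae_iff.2 hker] with x hx
  exact propext (Ne.le_iff_lt (Ne.symm hx))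

lemma compl_halfSpace_ae_eq {n : E} (hn : n ≠ 0) :
    (halfSpace n)ᶜ =ᵐ[volume] (Neg.neg ⁻¹' halfSpace n : Set E) := by
  refine (halfSpace_ae_eq hn).compl.trans (.of_eq ?_)
  rw [neg_preimage_halfSpace]
  exact Set.ext fun x ↦ not_lt (a := (0 : ℝ))

end HalfSpaces

section Girard

lemma exists_orthonormalBasis_polar {n m : E3} (hn : n ≠ 0) (hm : m ≠ 0) :
    ∃ (b : OrthonormalBasis (Fin 3) ℝ E3) (ψ : ℝ), |ψ| = angle n m ∧ n = ‖n‖ • b 0 ∧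
      m = ‖m‖ • (cos ψ • b 0 + sin ψ • b 1) := by
  set f : Fin 3 → E3 := ![n, m, 0]
  set b := InnerProductSpace.gramSchmidtOrthonormalBasis (𝕜 := ℝ) (by simp) f
  have hnorm : ‖n‖ ≠ 0 := norm_ne_zero_iff.2 hn
  have hnb : n = ‖n‖ • b 0 := by
    have hgs : InnerProductSpace.gramSchmidt ℝ f 0 = n := InnerProductSpace.gramSchmidt_bot ℝ f
    have h0 : InnerProductSpace.gramSchmidtNormed ℝ f 0 = ‖n‖⁻¹ • n := by
      simp [InnerProductSpace.gramSchmidtNormed, hgs]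
    have hb0 : b 0 = ‖n‖⁻¹ • n :=
      (InnerProductSpace.gramSchmidtOrthonormalBasis_apply _ (by simp [h0, hn])).trans h0
    rw [hb0, smul_inv_smul₀ hnorm]
  set z : ℂ := ⟨inner ℝ (b 0) m, inner ℝ (b 1) m⟩
  have hm2 : inner ℝ (b 2) m = 0 :=
    InnerProductSpace.gramSchmidtOrthonormalBasis_inv_triangular _ f (i := 1) (by decide)
  have hmb : m = z.re • b 0 + z.im • b 1 := by
    conv_lhs => rw [← b.sum_repr' m, Fin.sum_univ_three, hm2, zero_smul, add_zero]
  have hz : ‖z‖ = ‖m‖ := by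
    rw [← sq_eq_sq₀ (norm_nonneg z) (norm_nonneg m), ← b.sum_sq_norm_inner_right m,
      Fin.sum_univ_three, hm2, Complex.sq_norm, Complex.normSq_apply]
    simp [z, sq]
  have hmψ : m = ‖m‖ • (cos z.arg • b 0 + sin z.arg • b 1) := by
    rw [smul_add, smul_smul, smul_smul, ← hz, Complex.norm_mul_cos_arg, Complex.norm_mul_sin_arg]
    exact hmb
  refine ⟨b, z.arg, ?_, hnb, hmψ⟩
  have hre : inner ℝ n m = ‖n‖ * (‖m‖ * cos z.arg) := by
    conv_lhs => rw [hnb, real_inner_smul_left]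
    rw [← hz, Complex.norm_mul_cos_arg]
  rw [angle, hre, ← mul_assoc, mul_div_cancel_left₀ _ (mul_ne_zero hnorm (norm_ne_zero_iff.2 hm)),
    ← cos_abs, arccos_cos (abs_nonneg _) (Complex.abs_arg_le_pi z)]

lemma volume_real_closedBall_inter_two_halfSpaces {n m : E3} (hn : n ≠ 0) (hm : m ≠ 0) :
    volume.real (closedBall 0 1 ∩ (halfSpace n ∩ halfSpace m)) = 2 / 3 * (π - angle n m) := by
  obtain ⟨b, ψ, hψ, hnb, hmb⟩ := exists_orthonormalBasis_polar hn hm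
  set W : Set E3 := {x | 0 < x 0} ∩ {x | 0 < x 0 * cos ψ + x 1 * sin ψ}
  have hW : NullMeasurableSet (closedBall (0 : E3) 1 ∩ W) :=
    (isClosed_closedBall.measurableSet.inter ((isOpen_lt (by fun_prop) (by fun_prop)).inter
      (isOpen_lt (by fun_prop) (by fun_prop))).measurableSet).nullMeasurableSet
  have hpre : closedBall 0 1 ∩ ({x | 0 < inner ℝ n x} ∩ {x | 0 < inner ℝ m x}) =
      b.repr ⁻¹' (closedBall 0 1 ∩ W) := by
    ext x
    have hnx : 0 < inner ℝ n x ↔ 0 < inner ℝ (b 0) x := by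
      conv_lhs => rw [hnb, real_inner_smul_left]
      exact mul_pos_iff_of_pos_left (norm_pos_iff.2 hn)
    have hmx : 0 < inner ℝ m x ↔ 0 < inner ℝ (b 0) x * cos ψ + inner ℝ (b 1) x * sin ψ := by
      conv_lhs => rw [hmb, real_inner_smul_left, inner_add_left, real_inner_smul_left,
        real_inner_smul_left]
      rw [mul_pos_iff_of_pos_left (norm_pos_iff.2 hm), mul_comm (cos ψ), mul_comm (sin ψ)]
    simp [W, hnx, hmx, b.repr_apply_apply]
  calc volume.real (closedBall 0 1 ∩ (halfSpace n ∩ halfSpace m))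
      = volume.real (closedBall 0 1 ∩ ({x | 0 < inner ℝ n x} ∩ {x | 0 < inner ℝ m x})) :=
        measureReal_congr <| ae_eq_set_inter ae_eq_rfl <|
          ae_eq_set_inter (halfSpace_ae_eq hn) (halfSpace_ae_eq hm)
    _ = volume.real (closedBall (0 : E3) 1 ∩ W) := by
        rw [hpre, b.measurePreserving_repr.measureReal_preimage hW]
    _ = 2 / 3 * (π - angle n m) := by
        rw [volume_real_closedBall_inter_planar_wedge (hψ ▸ angle_le_pi n m), hψ]

lemma measureReal_inter_three_of_compl {α : Type*} [MeasurableSpace α] {μ : Measure α}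
    [IsFiniteMeasure μ] {A B C : Set α} (hA : MeasurableSet A) (hB : MeasurableSet B)
    (hC : MeasurableSet C) (h : μ.real (Aᶜ ∩ Bᶜ ∩ Cᶜ) = μ.real (A ∩ B ∩ C)) :
    2 * μ.real (A ∩ B ∩ C) = μ.real Set.univ - (μ.real A + μ.real B + μ.real C) +
      (μ.real (A ∩ B) + μ.real (A ∩ C) + μ.real (B ∩ C)) := by
  have hunion : μ.real (A ∪ B ∪ C) = μ.real Set.univ - μ.real (A ∩ B ∩ C) := by
    rw [← h, ← Set.compl_union, ← Set.compl_union,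
      measureReal_compl ((hA.union hB).union hC), sub_sub_cancel]
  have hABC := measureReal_union_add_inter (μ := μ) (s := A ∪ B) hC
  have hAB := measureReal_union_add_inter (μ := μ) (s := A) hB
  have hACBC := measureReal_union_add_inter (μ := μ) (s := A ∩ C) (hB.inter hC)
  rw [Set.union_inter_distrib_right] at hABC
  rw [← Set.inter_inter_distrib_right] at hACBC
  linarith

lemma volume_real_closedBall_inter_three_halfSpaces {n₁ n₂ n₃ : E3} (h₁ : n₁ ≠ 0) (h₂ : n₂ ≠ 0)
    (h₃ : n₃ ≠ 0) :
    volume.real (closedBall 0 1 ∩ (halfSpace n₁ ∩ halfSpace n₂ ∩ halfSpace n₃)) =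
      ((π - angle n₁ n₂) + (π - angle n₁ n₃) + (π - angle n₂ n₃) - π) / 3 := by
  set μ : Measure E3 := volume.restrict (closedBall 0 1) with hμ
  have : IsFiniteMeasure μ := isFiniteMeasure_restrict.2 measure_closedBall_lt_top.ne
  have hres : ∀ {s : Set E3}, MeasurableSet s → μ.real s = volume.real (closedBall 0 1 ∩ s) :=
    fun hs ↦ by rw [hμ, measureReal_restrict_apply hs, Set.inter_comm]
  have hm := measurableSet_halfSpace (E := E3)
  have hball : μ.real Set.univ = 4 / 3 * π := by
    rw [hres .univ, Set.inter_univ, measureReal_def, EuclideanSpace.volume_closedBall_fin_three,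
      ENNReal.ofReal_one, one_pow, one_mul, ENNReal.toReal_ofReal (by positivity)]
    ring
  have htwo : ∀ {n m : E3}, n ≠ 0 → m ≠ 0 →
      μ.real (halfSpace n ∩ halfSpace m) = 2 / 3 * (π - angle n m) := fun hn hm' ↦ by
    rw [hres ((hm _).inter (hm _)), volume_real_closedBall_inter_two_halfSpaces hn hm']
  have hone : ∀ {n : E3}, n ≠ 0 → μ.real (halfSpace n) = 2 / 3 * π := fun {n} hn ↦ by
    rw [← Set.inter_self (halfSpace n), htwo hn hn, angle_self hn, sub_zero]
  have hneg : MeasurePreserving Neg.neg μ μ := by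
    have := (Measure.measurePreserving_neg (volume : Measure E3)).restrict_preimage
      (isClosed_closedBall (x := (0 : E3)) (ε := 1)).measurableSet
    rwa [Set.neg_preimage, neg_closedBall, neg_zero] at this
  have hsymm : μ.real ((halfSpace n₁)ᶜ ∩ (halfSpace n₂)ᶜ ∩ (halfSpace n₃)ᶜ) =
      μ.real (halfSpace n₁ ∩ halfSpace n₂ ∩ halfSpace n₃) := by
    rw [← hneg.measureReal_preimage (((hm n₁).inter (hm n₂)).inter (hm n₃)).nullMeasurableSet]
    exact measureReal_congr <| ae_restrict_of_ae <|
      ae_eq_set_inter (ae_eq_set_inter (compl_halfSpace_ae_eq h₁) (compl_halfSpace_ae_eq h₂))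
        (compl_halfSpace_ae_eq h₃)
  rw [← hres (((hm n₁).inter (hm n₂)).inter (hm n₃))]
  have hthree := measureReal_inter_three_of_compl (hm n₁) (hm n₂) (hm n₃) hsymm
  rw [hball, hone h₁, hone h₂, hone h₃, htwo h₁ h₂, htwo h₁ h₃, htwo h₂ h₃] at hthree
  linarith

end Girard

section FaceNormal

variable {ι E : Type*} [NormedAddCommGroup E] [InnerProductSpace ℝ E]
  (b : AffineBasis ι ℝ E)

/-- The part of the unit ball about the vertex `b i` cut out by the facets of the simplex through
`b i`. It need not lie in the simplex: the facet opposite `b i` may cut the ball. -/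
def vertexSector (i : ι) : Set E := closedBall (b i) 1 ∩ {x | ∀ j ≠ i, 0 ≤ b.coord j x}

lemma convexHull_inter_closedBall_subset_vertexSector (i : ι) :
    convexHull ℝ (Set.range b) ∩ closedBall (b i) 1 ⊆ vertexSector b i := by
  rw [b.convexHull_eq_nonneg_coord]
  exact fun x hx ↦ ⟨hx.2, fun j _ ↦ hx.1 j⟩

variable [FiniteDimensional ℝ E]

/-- The gradient of the `i`-th barycentric coordinate of a simplex. It is the inner normal of the
facet opposite the vertex `b i`, with length the reciprocal of the corresponding altitude. -/
def faceNormal (i : ι) : E :=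
  (InnerProductSpace.toDual ℝ E).symm (LinearMap.toContinuousLinearMap (b.coord i).linear)

lemma inner_faceNormal_sub (i : ι) (x y : E) :
    inner ℝ (faceNormal b i) (x - y) = b.coord i x - b.coord i y := by
  rw [faceNormal, InnerProductSpace.toDual_symm_apply, LinearMap.coe_toContinuousLinearMap',
    ← vsub_eq_sub, AffineMap.linearMap_vsub, vsub_eq_sub]

lemma coord_eq_inner_faceNormal {i j : ι} (hij : i ≠ j) (x : E) :
    b.coord i x = inner ℝ (faceNormal b i) (x - b j) := by
  rw [inner_faceNormal_sub, b.coord_apply_ne hij, sub_zero]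

lemma coord_eq_one_add_inner_faceNormal (i : ι) (x : E) :
    b.coord i x = 1 + inner ℝ (faceNormal b i) (x - b i) := by
  rw [inner_faceNormal_sub, b.coord_apply_eq, add_sub_cancel]

lemma faceNormal_ne_zero [Nontrivial ι] (i : ι) : faceNormal b i ≠ 0 := by
  obtain ⟨j, hij⟩ := exists_ne i
  intro h
  have := coord_eq_inner_faceNormal b hij.symm (b i)
  simp [h] at this

/-- The dihedral angle of a simplex between the facets opposite the vertices `b i` and `b j`. -/
def dihedralAngle (i j : ι) : ℝ := π - angle (faceNormal b i) (faceNormal b j)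

lemma vertexSector_subset_convexHull {i : ι} (hi : ‖faceNormal b i‖ ≤ 1) :
    vertexSector b i ⊆ convexHull ℝ (Set.range b) := by
  rw [b.convexHull_eq_nonneg_coord]
  intro x hx j
  rcases eq_or_ne j i with rfl | hj
  · have hinner : |inner ℝ (faceNormal b j) (x - b j)| ≤ 1 :=
      (abs_real_inner_le_norm _ _).trans <|
        mul_le_one₀ hi (norm_nonneg _) (mem_closedBall_iff_norm.1 hx.1)
    rw [coord_eq_one_add_inner_faceNormal]
    linarith [(abs_le.1 hinner).1]
  · exact hx.2 j hj

variable [MeasurableSpace E] [BorelSpace E]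

lemma measurableSet_vertexSector (i : ι) : MeasurableSet (vertexSector b i) := by
  refine (isClosed_closedBall.inter ?_).measurableSet
  simp only [Set.ofPred_forall]
  exact isClosed_iInter fun j ↦ isClosed_iInter fun _ ↦
    isClosed_le continuous_const (b.coord j).continuous_of_finiteDimensional

lemma volume_vertexSector_lt_top (i : ι) : volume (vertexSector b i) < ⊤ :=
  (measure_mono Set.inter_subset_left).trans_lt measure_closedBall_lt_top

lemma volume_real_convexHull_inter_balls_le [Fintype ι] :
    volume.real (convexHull ℝ (Set.range b) ∩ ⋃ i, closedBall (b i) 1) ≤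
      ∑ i, volume.real (vertexSector b i) := by
  rw [Set.inter_iUnion]
  exact (measureReal_iUnion_fintype_le _).trans <| Finset.sum_le_sum fun i _ ↦
    measureReal_mono (convexHull_inter_closedBall_subset_vertexSector b i)
      (volume_vertexSector_lt_top b i).ne

lemma closedBall_one_inter_closedBall_one_subset_sphere {X : Type*} [PseudoMetricSpace X]
    {p q : X} (h : 2 ≤ dist p q) : closedBall p 1 ∩ closedBall q 1 ⊆ sphere p 1 := by
  rintro x ⟨hp, hq⟩
  rw [mem_closedBall] at hp hq
  exact hp.antisymm (by linarith [dist_triangle_left p q x])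

lemma volume_real_convexHull_inter_balls_eq [Fintype ι] [Nontrivial E]
    (hdist : Pairwise fun i j ↦ 2 ≤ dist (b i) (b j)) (halt : ∀ i, ‖faceNormal b i‖ ≤ 1) :
    volume.real (convexHull ℝ (Set.range b) ∩ ⋃ i, closedBall (b i) 1) =
      ∑ i, volume.real (vertexSector b i) := by
  have hunion : convexHull ℝ (Set.range b) ∩ ⋃ i, closedBall (b i) 1 = ⋃ i, vertexSector b i := by
    rw [Set.inter_iUnion]
    refine Set.iUnion_congr fun i ↦
      (convexHull_inter_closedBall_subset_vertexSector b i).antisymm fun x hx ↦ ?_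
    exact ⟨vertexSector_subset_convexHull b (halt i) hx, hx.1⟩
  have hdisj : Pairwise (Function.onFun (AEDisjoint volume) (vertexSector b)) := fun i j hij ↦
    measure_mono_null ((Set.inter_subset_inter Set.inter_subset_left Set.inter_subset_left).trans
      (closedBall_one_inter_closedBall_one_subset_sphere (hdist hij)))
      (Measure.addHaar_sphere volume _ _)
  rw [hunion, measureReal_def,
    measure_iUnion₀ hdisj fun i ↦ (measurableSet_vertexSector b i).nullMeasurableSet,
    tsum_fintype, ENNReal.toReal_sum fun i _ ↦ (volume_vertexSector_lt_top b i).ne]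
  rfl

end FaceNormal

section Tetrahedron

variable (b : AffineBasis (Fin 4) ℝ E3)

lemma volume_real_vertexSector {i j k l : Fin 4} (h : [i, j, k, l].Nodup) :
    volume.real (vertexSector b i) =
      (dihedralAngle b j k + dihedralAngle b j l + dihedralAngle b k l - π) / 3 := by
  have hne : ∀ m, m ≠ i ↔ m = j ∨ m = k ∨ m = l := by
    decide +revert
  set C : Set E3 :=
    halfSpace (faceNormal b j) ∩ halfSpace (faceNormal b k) ∩ halfSpace (faceNormal b l) with hC
  have htrans : vertexSector b i = (· - b i) ⁻¹' (closedBall 0 1 ∩ C) := by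
    ext x
    have hcoord : ∀ m ≠ i, (0 ≤ b.coord m x ↔ x - b i ∈ halfSpace (faceNormal b m)) :=
      fun m hm ↦ by rw [coord_eq_inner_faceNormal b hm]; rfl
    simp only [vertexSector, hC, Set.mem_inter_iff, Set.mem_preimage, Set.mem_ofPred_eq,
      mem_closedBall_iff_norm, sub_zero, ← hcoord j ((hne j).2 (by simp)),
      ← hcoord k ((hne k).2 (by simp)), ← hcoord l ((hne l).2 (by simp)), hne,
      forall_eq_or_imp, forall_eq, and_assoc]
  have hCm : MeasurableSet C :=
    ((measurableSet_halfSpace _).inter (measurableSet_halfSpace _)).inter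
      (measurableSet_halfSpace _)
  rw [htrans, (measurePreserving_sub_right volume (b i)).measureReal_preimage
      (isClosed_closedBall.measurableSet.inter hCm).nullMeasurableSet,
    volume_real_closedBall_inter_three_halfSpaces (faceNormal_ne_zero b j)
      (faceNormal_ne_zero b k) (faceNormal_ne_zero b l)]
  rfl

lemma sum_volume_real_vertexSector :
    ∑ i, volume.real (vertexSector b i) =
      (2 * (dihedralAngle b 0 1 + dihedralAngle b 0 2 + dihedralAngle b 0 3 +
        dihedralAngle b 1 2 + dihedralAngle b 1 3 + dihedralAngle b 2 3) - 4 * π) / 3 := by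
  rw [Fin.sum_univ_four, volume_real_vertexSector b (i := 0) (j := 1) (k := 2) (l := 3) (by decide),
    volume_real_vertexSector b (i := 1) (j := 0) (k := 2) (l := 3) (by decide),
    volume_real_vertexSector b (i := 2) (j := 0) (k := 1) (l := 3) (by decide),
    volume_real_vertexSector b (i := 3) (j := 0) (k := 1) (l := 2) (by decide)]
  ring

end Tetrahedron

section SimplexVolume

/-- The corner of the cube `[0, t]ⁿ` cut off by the hyperplane `∑ xᵢ = t`. -/
def cornerSimplex (n : ℕ) (t : ℝ) : Set (Fin n → ℝ) := Set.Ici 0 ∩ {x | ∑ i, x i ≤ t}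

lemma measurableSet_cornerSimplex (n : ℕ) (t : ℝ) : MeasurableSet (cornerSimplex n t) :=
  (isClosed_Ici.inter (isClosed_le (by fun_prop) continuous_const)).measurableSet

lemma convex_cornerSimplex (n : ℕ) (t : ℝ) : Convex ℝ (cornerSimplex n t) :=
  (convex_Ici 0).inter <| convex_halfSpace_le
    ⟨fun _ _ ↦ Finset.sum_add_distrib, fun _ _ ↦ by simp [Finset.mul_sum]⟩ t

lemma lintegral_ofReal_sub_pow (n : ℕ) {t : ℝ} (ht : 0 ≤ t) :
    ∫⁻ s in Set.Icc 0 t, ENNReal.ofReal ((t - s) ^ n) =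
      ENNReal.ofReal (t ^ (n + 1) / (n + 1)) := by
  have hint : IntegrableOn (fun s ↦ (t - s) ^ n) (Set.Icc 0 t) :=
    Continuous.integrableOn_Icc (by fun_prop)
  have hnonneg : 0 ≤ᵐ[volume.restrict (Set.Icc 0 t)] fun s ↦ (t - s) ^ n :=
    (ae_restrict_iff' measurableSet_Icc).2 <| .of_forall fun s hs ↦ pow_nonneg (sub_nonneg.2 hs.2) n
  rw [← ofReal_integral_eq_lintegral_ofReal hint hnonneg, integral_Icc_eq_integral_Ioc,
    ← intervalIntegral.integral_of_le ht,
    intervalIntegral.integral_comp_sub_left (fun s ↦ s ^ n) t, integral_pow]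
  simp

lemma volume_cornerSimplex (n : ℕ) {t : ℝ} (ht : 0 ≤ t) :
    volume (cornerSimplex n t) = ENNReal.ofReal (t ^ n / n.factorial) := by
  induction n generalizing t with
  | zero =>
    have huniv : cornerSimplex 0 t = Set.univ :=
      Set.eq_univ_of_forall fun x ↦ ⟨(Subsingleton.elim 0 x).le, by simpa using ht⟩
    simp [huniv, volume_pi]
  | succ n ih =>
    set S := {q : ℝ × (Fin n → ℝ) | q.1 ∈ Set.Icc 0 t ∧ q.2 ∈ cornerSimplex n (t - q.1)} with hS
    have hpre : cornerSimplex (n + 1) t =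
        MeasurableEquiv.piFinSuccAbove (fun _ : Fin (n + 1) ↦ ℝ) 0 ⁻¹' S := by
      ext x
      have hsum : x 0 + ∑ i : Fin n, x i.succ ≤ t ↔ ∑ i : Fin n, x i.succ ≤ t - x 0 :=
        le_sub_iff_add_le'.symm
      simp only [cornerSimplex, hS, Set.mem_inter_iff, Set.mem_Ici, Pi.le_def, Fin.forall_fin_succ,
        Set.mem_ofPred_eq, Fin.sum_univ_succ, hsum, Set.mem_preimage, Set.mem_Icc]
      refine ⟨fun h ↦ ⟨⟨h.1.1, ?_⟩, h.1.2, h.2⟩, fun h ↦ ⟨⟨h.1.1, h.2.1⟩, h.2.2⟩⟩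
      exact sub_nonneg.1 ((Finset.sum_nonneg fun i _ ↦ h.1.2 i).trans h.2)
    have hSm : MeasurableSet S :=
      (measurable_fst measurableSet_Icc).inter <|
        (isClosed_Ici.preimage continuous_snd).measurableSet.inter
          (isClosed_le (by fun_prop) (by fun_prop)).measurableSet
    have hslice : ∀ s, volume (Prod.mk s ⁻¹' S) = (Set.Icc 0 t).indicator
        (fun s ↦ ENNReal.ofReal ((t - s) ^ n) * ENNReal.ofReal (n.factorial : ℝ)⁻¹) s := by
      intro s
      by_cases hs : s ∈ Set.Icc 0 t
      · rw [Set.indicator_of_mem hs, ← ENNReal.ofReal_mul (pow_nonneg (sub_nonneg.2 hs.2) n),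
          ← div_eq_mul_inv, ← ih (sub_nonneg.2 hs.2)]
        simp [hS, hs.1, hs.2]
      · rw [Set.indicator_of_notMem hs]
        exact measure_mono_null (fun x hx ↦ hs hx.1) measure_empty
    rw [hpre, (volume_preserving_piFinSuccAbove _ 0).measure_preimage hSm.nullMeasurableSet,
      Measure.volume_eq_prod, Measure.prod_apply hSm, lintegral_congr hslice,
      lintegral_indicator measurableSet_Icc, lintegral_mul_const _ (by fun_prop),
      lintegral_ofReal_sub_pow n ht, ← ENNReal.ofReal_mul (by positivity), Nat.factorial_succ]
    push_cast
    field_simp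

lemma convexHull_range_eq_image_cornerSimplex {E : Type*} [AddCommGroup E] [Module ℝ E] {n : ℕ}
    (p : Fin (n + 1) → E) :
    convexHull ℝ (Set.range p) =
      (fun x : Fin n → ℝ ↦ ∑ i, x i • (p i.succ - p 0) + p 0) '' cornerSimplex n 1 := by
  set g : (Fin n → ℝ) →ᵃ[ℝ] E :=
    (∑ i : Fin n, (LinearMap.proj i).smulRight (p i.succ - p 0)).toAffineMap +
      AffineMap.const ℝ _ (p 0) with hg
  have hgx : ⇑g = fun x : Fin n → ℝ ↦ ∑ i, x i • (p i.succ - p 0) + p 0 := by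
    ext x
    simp [hg]
  rw [← hgx]
  refine (convexHull_min ?_ ((convex_cornerSimplex n 1).affine_image g)).antisymm ?_
  · rintro _ ⟨j, rfl⟩
    induction j using Fin.cases with
    | zero => exact ⟨0, by simp [cornerSimplex], by simp [hgx]⟩
    | succ j =>
      refine ⟨Pi.single j 1, ⟨Pi.single_nonneg.2 zero_le_one, by simp⟩, ?_⟩
      simp [hgx, Pi.single_apply]
  · rintro _ ⟨x, ⟨hx0, hx1⟩, rfl⟩
    have hcomb : g x = ∑ j, (Fin.cons (1 - ∑ i, x i) x : Fin (n + 1) → ℝ) j • p j := by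
      simp only [hgx, smul_sub, Finset.sum_sub_distrib, ← Finset.sum_smul, Fin.sum_univ_succ,
        Fin.cons_zero, Fin.cons_succ, sub_smul, one_smul]
      abel
    rw [hcomb]
    refine (convex_convexHull ℝ _).sum_mem (fun j _ ↦ ?_) (by simp [Fin.sum_univ_succ])
      fun j _ ↦ subset_convexHull ℝ _ (Set.mem_range_self j)
    induction j using Fin.cases with
    | zero => exact sub_nonneg.2 hx1
    | succ j => exact hx0 j

lemma volume_real_convexHull_range {n : ℕ} (p : Fin (n + 1) → EuclideanSpace ℝ (Fin n)) :
    volume.real (convexHull ℝ (Set.range p)) =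
      √(Matrix.gram ℝ fun i : Fin n ↦ p i.succ - p 0).det / n.factorial := by
  set v := fun i : Fin n ↦ p i.succ - p 0
  set o := EuclideanSpace.basisFun (Fin n) ℝ
  set A : EuclideanSpace ℝ (Fin n) →ₗ[ℝ] EuclideanSpace ℝ (Fin n) := o.toBasis.constr ℝ v
  have hA : ∀ i, A (o i) = v i := fun i ↦ by
    rw [← o.coe_toBasis, Module.Basis.constr_basis]
  have hdet : |LinearMap.det A| = √(Matrix.gram ℝ v).det := by
    have hsq : A.normDet ^ 2 = (Matrix.gram ℝ v).det :=
      (A.normDet_sq_eq_det_gram o).trans (by simp only [hA])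
    rw [← A.normDet_eq_abs_det, ← hsq, sqrt_sq A.normDet_nonneg]
  have himage : convexHull ℝ (Set.range p) =
      (· + p 0) '' (A '' (WithLp.ofLp ⁻¹' cornerSimplex n 1)) := by
    have hAx : ∀ x, A x = ∑ i, x i • v i := fun x ↦ by
      simp [A, Module.Basis.constr_apply_fintype, o]
    rw [convexHull_range_eq_image_cornerSimplex, Set.image_image]
    ext y
    simp only [Set.mem_image, Set.mem_preimage, hAx]
    exact (WithLp.equiv 2 (Fin n → ℝ)).surjective.exists
  have hcorner : volume (WithLp.ofLp ⁻¹' cornerSimplex n 1 : Set (EuclideanSpace ℝ (Fin n))) =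
      ENNReal.ofReal (1 / n.factorial) := by
    rw [(PiLp.volume_preserving_ofLp (Fin n)).measure_preimage
      (measurableSet_cornerSimplex n 1).nullMeasurableSet, volume_cornerSimplex n zero_le_one,
      one_pow]
  rw [himage, measureReal_def, Set.image_add_right, measure_preimage_add_right,
    Measure.addHaar_image_linearMap, hcorner, hdet, ← ENNReal.ofReal_mul (sqrt_nonneg _),
    ENNReal.toReal_ofReal (by positivity), mul_one_div]

end SimplexVolume

section DualBasis

variable {ι E : Type*} [Fintype ι] [DecidableEq ι] [NormedAddCommGroup E] [InnerProductSpace ℝ E]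

lemma gram_mul_gram_eq_one (o : OrthonormalBasis ι ℝ E) {m v : ι → E}
    (h : ∀ i j, inner ℝ (m i) (v j) = if i = j then 1 else 0) :
    Matrix.gram ℝ m * Matrix.gram ℝ v = 1 := by
  set M : Matrix ι ι ℝ := .of fun i j ↦ o.repr (m j) i
  set V : Matrix ι ι ℝ := .of fun i j ↦ o.repr (v j) i
  have hMV : M.transpose * V = 1 := by
    ext i j
    rw [Matrix.mul_apply, Matrix.one_apply, ← h, ← o.sum_inner_mul_inner]
    simp [M, V, o.repr_apply_apply, real_inner_comm]
  have hMVt : M * V.transpose = 1 := by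
    rw [← Matrix.transpose_inj, Matrix.transpose_mul, Matrix.transpose_transpose,
      Matrix.transpose_one]
    exact mul_eq_one_comm.1 hMV
  rw [Matrix.gram_eq_conjTranspose_mul o m, Matrix.gram_eq_conjTranspose_mul o v,
    Matrix.conjTranspose_eq_transpose_of_trivial, Matrix.conjTranspose_eq_transpose_of_trivial,
    Matrix.mul_assoc, ← Matrix.mul_assoc M, hMVt, Matrix.one_mul, hMV]

lemma det_smul_gram_eq_adjugate {m v : ι → E} (h : Matrix.gram ℝ m * Matrix.gram ℝ v = 1) :
    (Matrix.gram ℝ v).det • Matrix.gram ℝ m = (Matrix.gram ℝ v).adjugate := by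
  rw [← Matrix.one_mul (Matrix.adjugate _), ← h, Matrix.mul_assoc, Matrix.mul_adjugate,
    Matrix.mul_smul, Matrix.mul_one]

lemma det_gram_pos {m v : ι → E} (h : Matrix.gram ℝ m * Matrix.gram ℝ v = 1) :
    0 < (Matrix.gram ℝ v).det :=
  (Matrix.posSemidef_gram ℝ v).det_nonneg.lt_of_ne' fun h0 ↦ by
    simpa [h0] using congrArg Matrix.det h

end DualBasis

section EdgeLengths

/-- Sixteen times the squared area of a triangle with squared edge lengths `a`, `b`, `c`. -/
def heron (a b c : ℝ) : ℝ := 2 * (a * b + b * c + c * a) - a ^ 2 - b ^ 2 - c ^ 2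

/-- The Cayley–Menger polynomial: `144` times the squared volume of a simplex whose edges
`01, 02, 03, 23, 13, 12` have squared lengths `x₁, …, x₆`. -/
def cayleyMenger (x₁ x₂ x₃ x₄ x₅ x₆ : ℝ) : ℝ :=
  x₁ * x₄ * (-x₁ + x₂ + x₃ - x₄ + x₅ + x₆) + x₂ * x₅ * (x₁ - x₂ + x₃ + x₄ - x₅ + x₆) +
    x₃ * x₆ * (x₁ + x₂ - x₃ + x₄ + x₅ - x₆) -
    x₂ * x₃ * x₄ - x₁ * x₃ * x₅ - x₁ * x₂ * x₆ - x₄ * x₅ * x₆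

/-- The derivative of `cayleyMenger` in its fourth argument. -/
def cayleyMengerDeriv (x₁ x₂ x₃ x₄ x₅ x₆ : ℝ) : ℝ :=
  x₁ * (-x₁ + x₂ + x₃ - 2 * x₄ + x₅ + x₆) + x₂ * x₅ + x₃ * x₆ - x₂ * x₃ - x₅ * x₆

/-- The dihedral angle along the first edge of a simplex, in terms of the squared edge lengths
`x₁, …, x₆` of the edges `01, 02, 03, 23, 13, 12`. -/
def dih (x₁ x₂ x₃ x₄ x₅ x₆ : ℝ) : ℝ :=
  arccos (cayleyMengerDeriv x₁ x₂ x₃ x₄ x₅ x₆ / √(heron x₁ x₂ x₆ * heron x₁ x₃ x₅))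

lemma real_inner_sub_sub_eq_dist_sq {E : Type*} [NormedAddCommGroup E] [InnerProductSpace ℝ E]
    (o p q : E) : inner ℝ (p - o) (q - o) = (dist o p ^ 2 + dist o q ^ 2 - dist p q ^ 2) / 2 := by
  have hpq := norm_sub_sq_real (p - o) (q - o)
  rw [sub_sub_sub_cancel_right] at hpq
  rw [dist_comm o p, dist_comm o q, dist_eq_norm, dist_eq_norm, dist_eq_norm]
  linarith

lemma det_gram_sub_eq_cayleyMenger {E : Type*} [NormedAddCommGroup E] [InnerProductSpace ℝ E]
    (o p q r : E) :
    (Matrix.gram ℝ ![p - o, q - o, r - o]).det =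
      cayleyMenger (dist o p ^ 2) (dist o q ^ 2) (dist o r ^ 2) (dist q r ^ 2) (dist p r ^ 2)
        (dist p q ^ 2) / 4 := by
  rw [Matrix.det_fin_three]
  simp only [Matrix.gram_apply, Matrix.cons_val, real_inner_sub_sub_eq_dist_sq, dist_self,
    dist_comm q p, dist_comm r p, dist_comm r q, cayleyMenger]
  ring

variable (b : AffineBasis (Fin 4) ℝ E3)

lemma volume_real_convexHull_eq_sqrt_cayleyMenger :
    volume.real (convexHull ℝ (Set.range b)) =
      √(cayleyMenger (dist (b 0) (b 1) ^ 2) (dist (b 0) (b 2) ^ 2) (dist (b 0) (b 3) ^ 2)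
        (dist (b 2) (b 3) ^ 2) (dist (b 1) (b 3) ^ 2) (dist (b 1) (b 2) ^ 2)) / 12 := by
  have hv : (fun i : Fin 3 ↦ b i.succ - b 0) = ![b 1 - b 0, b 2 - b 0, b 3 - b 0] :=
    List.ofFn_inj.1 rfl
  rw [volume_real_convexHull_range, hv, det_gram_sub_eq_cayleyMenger, sqrt_div' _ (by norm_num),
    show √(4 : ℝ) = 2 by rw [sqrt_eq_iff_mul_self_eq] <;> norm_num]
  norm_num [Nat.factorial]
  ring

variable {i j k l : Fin 4} (h : [i, j, k, l].Nodup)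
include h

lemma gram_faceNormal_mul_gram :
    Matrix.gram ℝ ![faceNormal b j, faceNormal b k, faceNormal b l] *
      Matrix.gram ℝ ![b j - b i, b k - b i, b l - b i] = 1 := by
  have hne : (j ≠ i ∧ k ≠ i ∧ l ≠ i) ∧ j ≠ k ∧ j ≠ l ∧ k ≠ l := by grind
  have hdual : ∀ s ≠ i, ∀ t, inner ℝ (faceNormal b s) (b t - b i) = if s = t then 1 else 0 :=
    fun s hs t ↦ by rw [← coord_eq_inner_faceNormal b hs, b.coord_apply]
  refine gram_mul_gram_eq_one (EuclideanSpace.basisFun (Fin 3) ℝ) fun p q ↦ ?_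
  fin_cases p <;> fin_cases q <;> simp [hdual, hne, hne.2.1.symm, hne.2.2.1.symm, hne.2.2.2.symm]

lemma cayleyMenger_dist_pos :
    0 < cayleyMenger (dist (b i) (b j) ^ 2) (dist (b i) (b k) ^ 2) (dist (b i) (b l) ^ 2)
      (dist (b k) (b l) ^ 2) (dist (b j) (b l) ^ 2) (dist (b j) (b k) ^ 2) := by
  have := det_gram_pos (gram_faceNormal_mul_gram b h)
  rw [det_gram_sub_eq_cayleyMenger] at this
  linarith

lemma cayleyMenger_mul_inner_faceNormal :
    cayleyMenger (dist (b i) (b j) ^ 2) (dist (b i) (b k) ^ 2) (dist (b i) (b l) ^ 2)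
        (dist (b k) (b l) ^ 2) (dist (b j) (b l) ^ 2) (dist (b j) (b k) ^ 2) *
      inner ℝ (faceNormal b k) (faceNormal b l) =
    -cayleyMengerDeriv (dist (b i) (b j) ^ 2) (dist (b i) (b k) ^ 2) (dist (b i) (b l) ^ 2)
        (dist (b k) (b l) ^ 2) (dist (b j) (b l) ^ 2) (dist (b j) (b k) ^ 2) := by
  have hadj := congrFun₂ (det_smul_gram_eq_adjugate (gram_faceNormal_mul_gram b h)) 1 2
  rw [det_gram_sub_eq_cayleyMenger, Matrix.adjugate_fin_three] at hadj
  simp only [Matrix.smul_apply, Matrix.gram_apply, Matrix.cons_val, Matrix.of_apply, smul_eq_mul,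
    real_inner_sub_sub_eq_dist_sq, dist_self, dist_comm (b k) (b j)] at hadj
  rw [cayleyMengerDeriv]
  linear_combination 4 * hadj

lemma cayleyMenger_mul_norm_faceNormal_sq :
    cayleyMenger (dist (b i) (b j) ^ 2) (dist (b i) (b k) ^ 2) (dist (b i) (b l) ^ 2)
        (dist (b k) (b l) ^ 2) (dist (b j) (b l) ^ 2) (dist (b j) (b k) ^ 2) *
      ‖faceNormal b l‖ ^ 2 =
    heron (dist (b i) (b j) ^ 2) (dist (b i) (b k) ^ 2) (dist (b j) (b k) ^ 2) := by
  have hadj := congrFun₂ (det_smul_gram_eq_adjugate (gram_faceNormal_mul_gram b h)) 2 2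
  rw [det_gram_sub_eq_cayleyMenger, Matrix.adjugate_fin_three] at hadj
  simp only [Matrix.smul_apply, Matrix.gram_apply, Matrix.cons_val, Matrix.of_apply, smul_eq_mul,
    real_inner_sub_sub_eq_dist_sq, dist_self, dist_comm (b k) (b j)] at hadj
  rw [heron, ← real_inner_self_eq_norm_sq]
  linear_combination 4 * hadj

lemma dihedralAngle_eq_dih :
    dihedralAngle b k l =
      dih (dist (b i) (b j) ^ 2) (dist (b i) (b k) ^ 2) (dist (b i) (b l) ^ 2)
        (dist (b k) (b l) ^ 2) (dist (b j) (b l) ^ 2) (dist (b j) (b k) ^ 2) := by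
  set x₁ := dist (b i) (b j) ^ 2
  set x₂ := dist (b i) (b k) ^ 2
  set x₃ := dist (b i) (b l) ^ 2
  set x₄ := dist (b k) (b l) ^ 2 with hx₄
  set x₅ := dist (b j) (b l) ^ 2
  set x₆ := dist (b j) (b k) ^ 2
  set Δ := cayleyMenger x₁ x₂ x₃ x₄ x₅ x₆ with hΔ
  have hpos : 0 < Δ := cayleyMenger_dist_pos b h
  have hinner := cayleyMenger_mul_inner_faceNormal b h
  have hl := cayleyMenger_mul_norm_faceNormal_sq b h
  have hk := cayleyMenger_mul_norm_faceNormal_sq b (show [i, j, l, k].Nodup by grind)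
  rw [dist_comm (b l) (b k), show cayleyMenger _ _ _ _ _ _ = Δ by
    simp only [hΔ, cayleyMenger, ← hx₄]; ring] at hk
  have hsqrt : √(heron x₁ x₂ x₆ * heron x₁ x₃ x₅) =
      Δ * (‖faceNormal b k‖ * ‖faceNormal b l‖) := by
    rw [← hl, ← hk, sqrt_eq_iff_mul_self_eq (by positivity) (by positivity)]
    ring
  rw [dihedralAngle, angle, dih, hsqrt, ← arccos_neg, ← neg_neg (cayleyMengerDeriv _ _ _ _ _ _),
    ← hinner, neg_div, mul_div_mul_left _ _ hpos.ne']

end EdgeLengths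

section Arccos

lemma le_tangent_add_sq_of_deriv2_le {D : Set ℝ} (hD : Convex ℝ D) {f f' f'' : ℝ → ℝ} {K : ℝ}
    (hf' : ∀ z ∈ D, HasDerivAt f (f' z) z) (hf'' : ∀ z ∈ D, HasDerivAt f' (f'' z) z)
    (hK : ∀ z ∈ D, f'' z ≤ K) {x y : ℝ} (hx : x ∈ D) (hy : y ∈ D) :
    f y ≤ f x + f' x * (y - x) + K / 2 * (y - x) ^ 2 := by
  have hg' : ∀ z ∈ D, HasDerivAt (fun z ↦ f z - K / 2 * (z - x) ^ 2) (f' z - K * (z - x)) z :=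
    fun z hz ↦ by
      convert! (hf' z hz).sub ((((hasDerivAt_id z).sub_const x).pow 2).const_mul (K / 2)) using 1
      simp only [id]
      ring
  have hg'' : ∀ z ∈ D, HasDerivAt (fun z ↦ f' z - K * (z - x)) (f'' z - K) z := fun z hz ↦ by
    convert! (hf'' z hz).sub (((hasDerivAt_id z).sub_const x).const_mul K) using 1
    rw [mul_one]
  have hconc : ConcaveOn ℝ D fun z ↦ f z - K / 2 * (z - x) ^ 2 :=
    concaveOn_of_hasDerivWithinAt2_nonpos hD
      (fun z hz ↦ (hg' z hz).continuousAt.continuousWithinAt)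
      (fun z hz ↦ (hg' z (interior_subset hz)).hasDerivWithinAt)
      (fun z hz ↦ (hg'' z (interior_subset hz)).hasDerivWithinAt)
      (fun z hz ↦ sub_nonpos.2 (hK z (interior_subset hz)))
  rcases lt_trichotomy x y with hxy | rfl | hyx
  · have h := hconc.slope_le_of_hasDerivAt hx hy hxy (hg' x hx)
    rw [slope_def_field, div_le_iff₀ (sub_pos.2 hxy)] at h
    linear_combination h
  · simp
  · have h := hconc.le_slope_of_hasDerivAt hy hx hyx (hg' x hx)
    rw [slope_def_field, le_div_iff₀ (sub_pos.2 hyx)] at h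
    linear_combination h

lemma hasDerivAt_inv_sqrt_one_sub_sq {x : ℝ} (hx : 0 < 1 - x ^ 2) :
    HasDerivAt (fun y ↦ (√(1 - y ^ 2))⁻¹) (x / √(1 - x ^ 2) ^ 3) x := by
  have hs : 0 < √(1 - x ^ 2) := sqrt_pos.2 hx
  convert! ((((hasDerivAt_id x).pow 2).const_sub 1).sqrt hx.ne').inv hs.ne' using 1
  simp only [id, Pi.pow_apply, Nat.cast_ofNat]
  field_simp
  ring

lemma arccos_le_tangent_add_sq {r x y : ℝ} (hr : r < 1) (hx : |x| ≤ r) (hy : |y| ≤ r) :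
    arccos y ≤ arccos x - (y - x) / √(1 - x ^ 2) + r / √(1 - r ^ 2) ^ 3 / 2 * (y - x) ^ 2 := by
  have hr₀ : 0 ≤ r := (abs_nonneg x).trans hx
  have hr₁ : 0 < 1 - r ^ 2 := by nlinarith
  have hsq : ∀ z ∈ Set.Icc (-r) r, 1 - r ^ 2 ≤ 1 - z ^ 2 := fun z hz ↦
    sub_le_sub_left (sq_le_sq' hz.1 hz.2) 1
  have h := le_tangent_add_sq_of_deriv2_le (convex_Icc (-r) r) (f := arccos)
    (f'' := fun z ↦ -(z / √(1 - z ^ 2) ^ 3)) (K := r / √(1 - r ^ 2) ^ 3)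
    (fun z hz ↦ (hasDerivAt_arccos (by linarith [hz.1]) (by linarith [hz.2])))
    (fun z hz ↦ by
      simpa only [one_div, Pi.neg_def] using
        (hasDerivAt_inv_sqrt_one_sub_sq (hr₁.trans_le (hsq z hz))).neg)
    (fun z hz ↦ by
      have := hsq z hz
      rw [← neg_div]
      gcongr
      linarith [hz.1])
    (abs_le.1 hx) (abs_le.1 hy)
  linear_combination h

lemma one_add_half_sub_sq_le_sqrt {z : ℝ} (hz : -1 ≤ z) :
    1 + z / 2 - z ^ 2 / 2 ≤ √(1 + z) := by
  rcases le_total z 2 with hz₂ | hz₂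
  · have hfactor : 0 ≤ z ^ 2 * ((z + 1) * (3 - z)) :=
      mul_nonneg (sq_nonneg z) (mul_nonneg (by linarith) (by linarith))
    exact le_sqrt_of_sq_le (by linarith)
  · exact le_trans (by nlinarith) (sqrt_nonneg _)

lemma abs_sqrt_mul_sub_one_le {a b h : ℝ} (hh : h ≤ 1) (ha : |a| ≤ h) (hb : |b| ≤ h) :
    |√((1 + a) * (1 + b)) - 1| ≤ h := by
  rw [abs_le] at ha hb
  refine abs_le.2 ⟨?_, ?_⟩
  · linarith [le_sqrt_of_sq_le (show (1 - h) ^ 2 ≤ (1 + a) * (1 + b) by nlinarith)]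
  · linarith [sqrt_le_iff.2 ⟨show 0 ≤ 1 + h by linarith,
      show (1 + a) * (1 + b) ≤ (1 + h) ^ 2 by nlinarith⟩]

lemma abs_add_div_two_sub_sqrt_mul_le {a b h : ℝ} (hh : h ≤ 1 / 100) (ha : |a| ≤ h)
    (hb : |b| ≤ h) : |(a + b) / 2 - (√((1 + a) * (1 + b)) - 1)| ≤ 51 / 100 * h ^ 2 := by
  have hr₁ := (abs_le.1 (abs_sqrt_mul_sub_one_le (by linarith) ha hb)).1
  rw [abs_le] at ha hb
  set r := √((1 + a) * (1 + b))
  have hr_sq : r ^ 2 = (1 + a) * (1 + b) := sq_sqrt (by nlinarith)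
  have hamgm : (1 + (a + b) / 2 - r) * (1 + (a + b) / 2 + r) = ((a - b) / 2) ^ 2 := by
    linear_combination -hr_sq
  have hab : ((a - b) / 2) ^ 2 ≤ h ^ 2 := by
    rw [sq_le_sq, abs_le, abs_of_nonneg (by linarith)]
    constructor <;> linarith
  have hsum : 99 / 50 ≤ 1 + (a + b) / 2 + r := by linarith
  have hnonneg : 0 ≤ 1 + (a + b) / 2 - r :=
    nonneg_of_mul_nonneg_left (hamgm ▸ sq_nonneg _) (by linarith)
  rw [abs_of_nonneg (by linarith)]
  nlinarith [mul_le_mul_of_nonneg_left hsum hnonneg]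

lemma abs_div_sqrt_sub_le {a b c h ν : ℝ} (hh : h ≤ 1 / 100) (ha : |a| ≤ h) (hb : |b| ≤ h)
    (hν : |ν| ≤ h) (hc : |c| ≤ 3 / 5) :
    |(c + ν) / √((1 + a) * (1 + b)) - (c + ν - c * (a + b) / 2)| ≤ 2 * h ^ 2 := by
  have hh₀ : 0 ≤ h := (abs_nonneg a).trans ha
  have hr₁ := abs_sqrt_mul_sub_one_le (by linarith) ha hb
  have hmean := abs_add_div_two_sub_sqrt_mul_le hh ha hb
  set r := √((1 + a) * (1 + b))
  have hr_pos : 99 / 100 ≤ r := by linarith [(abs_le.1 hr₁).1]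
  have hsplit : (c + ν) / r - (c + ν - c * (a + b) / 2) =
      c * ((a + b) / 2 - (r - 1)) - (ν - c * (r - 1)) * ((r - 1) / r) := by
    field_simp
    ring
  have hquot : |(r - 1) / r| ≤ 100 / 99 * h := by
    rw [abs_div, abs_of_pos (by linarith : 0 < r), div_le_iff₀ (by linarith)]
    nlinarith [abs_nonneg (r - 1)]
  calc |(c + ν) / r - (c + ν - c * (a + b) / 2)|
      ≤ |c| * |(a + b) / 2 - (r - 1)| + (|ν| + |c| * |r - 1|) * |(r - 1) / r| := by
        rw [hsplit]
        refine (abs_sub _ _).trans ?_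
        rw [abs_mul, abs_mul, ← abs_mul c (r - 1)]
        gcongr
        exact abs_sub _ _
    _ ≤ 3 / 5 * (51 / 100 * h ^ 2) + (h + 3 / 5 * h) * (100 / 99 * h) := by gcongr
    _ ≤ 2 * h ^ 2 := by nlinarith [sq_nonneg h]

lemma arccos_div_sqrt_le {a b c h ν : ℝ} (hh : h ≤ 1 / 100) (ha : |a| ≤ h) (hb : |b| ≤ h)
    (hν : |ν| ≤ h) (hc : |c| ≤ 29 / 50) :
    arccos ((c + ν) / √((1 + a) * (1 + b))) ≤
      arccos c - (ν - c * (a + b) / 2) / √(1 - c ^ 2) + 21 / 5 * h ^ 2 := by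
  have hh₀ : 0 ≤ h := (abs_nonneg a).trans ha
  set y := (c + ν) / √((1 + a) * (1 + b))
  set δ := ν - c * (a + b) / 2
  have hyδ : |y - c - δ| ≤ 2 * h ^ 2 := by
    convert abs_div_sqrt_sub_le hh ha hb hν (hc.trans (by norm_num)) using 2
    ring
  have hδ : |δ| ≤ 8 / 5 * h := by
    have hab : |(a + b) / 2| ≤ h := by
      rw [abs_le] at ha hb ⊢
      constructor <;> linarith
    calc |δ| ≤ |ν| + |c| * |(a + b) / 2| := by
          rw [← abs_mul, ← mul_div_assoc]
          exact abs_sub _ _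
      _ ≤ h + 29 / 50 * h := by gcongr
      _ ≤ 8 / 5 * h := by linarith
  have hyc : |y - c| ≤ 41 / 25 * h := by
    rw [abs_le] at hyδ hδ ⊢
    constructor <;> nlinarith
  have hy : |y| ≤ 3 / 5 := by
    linarith [abs_sub_abs_le_abs_sub y c]
  have hs : 4 / 5 ≤ √(1 - c ^ 2) := le_sqrt_of_sq_le (by nlinarith [sq_abs c, abs_nonneg c])
  have htan := arccos_le_tangent_add_sq (r := 3 / 5) (by norm_num) (hc.trans (by norm_num)) hy
  rw [show √(1 - (3 / 5 : ℝ) ^ 2) = 4 / 5 by rw [sqrt_eq_iff_mul_self_eq] <;> norm_num] at htan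
  have hlin : δ / √(1 - c ^ 2) - 5 / 2 * h ^ 2 ≤ (y - c) / √(1 - c ^ 2) := by
    have : (δ - (y - c)) / √(1 - c ^ 2) ≤ 2 * h ^ 2 / (4 / 5) := by
      gcongr
      linarith [(abs_le.1 hyδ).1]
    rw [sub_div] at this
    linarith
  have hsq : (y - c) ^ 2 ≤ (41 / 25 * h) ^ 2 := sq_le_sq.2 (hyc.trans (le_abs_self _))
  nlinarith

end Arccos

section EdgeExpansion

lemma dih_le {x₁ x₂ x₃ x₄ x₅ x₆ s a b c h ν : ℝ} (hs : 0 < s)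
    (hN : cayleyMengerDeriv x₁ x₂ x₃ x₄ x₅ x₆ = s * (c + ν))
    (hH : heron x₁ x₂ x₆ * heron x₁ x₃ x₅ = s ^ 2 * ((1 + a) * (1 + b))) (hh : h ≤ 1 / 100)
    (ha : |a| ≤ h) (hb : |b| ≤ h) (hν : |ν| ≤ h) (hc : |c| ≤ 29 / 50) :
    dih x₁ x₂ x₃ x₄ x₅ x₆ ≤
      arccos c - (ν - c * (a + b) / 2) / √(1 - c ^ 2) + 21 / 5 * h ^ 2 := by
  rw [dih, hN, hH, sqrt_mul (sq_nonneg s), sqrt_sq hs.le, mul_div_mul_left _ _ hs.ne']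
  exact arccos_div_sqrt_le hh ha hb hν hc

lemma sqrt_one_sub_inv_sqrt_three_sq : √(1 - (1 / √3) ^ 2) = √2 / √3 := by
  rw [div_pow, sq_sqrt (by norm_num), ← sqrt_div (by norm_num)]
  norm_num

lemma sqrt_one_sub_neg_third_sq : √(1 - (-1 / 3 : ℝ) ^ 2) = 2 * √2 / 3 := by
  rw [sqrt_eq_iff_mul_self_eq (by norm_num) (by positivity)]
  linear_combination (-4 / 9) * sq_sqrt (show (0 : ℝ) ≤ 2 by norm_num)

lemma abs_le_of_add_sq {M k p : ℝ} (hM₀ : 0 ≤ M) (hM : M ≤ 1 / 20)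
    (hp : 0 ≤ k * M + M ^ 2 / 60 - p) (hp' : 0 ≤ k * M + M ^ 2 / 60 + p) :
    |p| ≤ (k + 1 / 1200) * M :=
  abs_le.2 (by constructor <;> nlinarith)

variable {e₁ e₂ e₃ e₄ e₅ e₆ : ℝ} (h₁ : 0 ≤ e₁) (h₂ : 0 ≤ e₂) (h₃ : 0 ≤ e₃) (h₄ : 0 ≤ e₄)
  (h₅ : 0 ≤ e₅) (h₆ : 0 ≤ e₆) (hM : e₁ + 2 * (e₂ + e₃ + e₄ + e₅ + e₆) ≤ 1 / 20)
include h₁ h₂ h₃ h₄ h₅ h₆ hM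

lemma dih_adjacent_le :
    dih (4 + e₂) (8 - e₁) (4 + e₃) (4 + e₅) (4 + e₄) (4 + e₆) ≤
      arccos (1 / √3) + √2 / 2 * (e₁ / 8 + e₂ / 12 + e₃ / 12 - e₄ / 6 + e₅ / 4) +
        2 / 25 * (e₁ + 2 * (e₂ + e₃ + e₄ + e₅ + e₆)) ^ 2 := by
  set M := e₁ + 2 * (e₂ + e₃ + e₄ + e₅ + e₆) with hMdef
  have hM₀ : 0 ≤ M := by positivity
  set a := heron (4 + e₂) (8 - e₁) (4 + e₆) / 64 - 1 with ha
  set b := heron (4 + e₂) (4 + e₃) (4 + e₄) / 48 - 1 with hb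
  set n := cayleyMengerDeriv (4 + e₂) (8 - e₁) (4 + e₃) (4 + e₅) (4 + e₄) (4 + e₆) / 32 - 1 with hn
  simp only [heron, cayleyMengerDeriv] at ha hb hn
  have hrem : -(M ^ 2 / 128) ≤
      n - (a + b) / 2 + (e₁ / 8 + e₂ / 12 + e₃ / 12 - e₄ / 6 + e₅ / 4) := by
    rw [← sub_nonneg, ha, hb, hn, hMdef]
    ring_nf
    positivity
  have key := dih_le (x₁ := 4 + e₂) (x₂ := 8 - e₁) (x₃ := 4 + e₃) (x₄ := 4 + e₅) (x₅ := 4 + e₄)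
    (x₆ := 4 + e₆) (s := 32 * √3) (a := a) (b := b) (c := 1 / √3) (h := (1 / 8 + 1 / 1200) * M)
    (ν := n / √3) (by positivity) (by rw [cayleyMengerDeriv, hn]; field_simp; ring)
    (by rw [heron, heron, ha, hb, mul_pow, sq_sqrt (by norm_num)]; ring) (by linarith)
    (by apply abs_le_of_add_sq hM₀ hM <;> rw [ha, hMdef] <;> ring_nf <;> positivity)
    (by apply abs_le_of_add_sq hM₀ hM <;> rw [hb, hMdef] <;> ring_nf <;> positivity)
    (by
      rw [abs_div, abs_of_pos (by positivity : 0 < √3)]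
      exact (div_le_self (abs_nonneg n) (one_le_sqrt.2 (by norm_num))).trans
        (by apply abs_le_of_add_sq hM₀ hM <;> rw [hn, hMdef] <;> ring_nf <;> positivity))
    (by
      rw [abs_of_pos (by positivity), div_le_comm₀ (by positivity) (by norm_num)]
      exact le_sqrt_of_sq_le (by norm_num))
  rw [sqrt_one_sub_inv_sqrt_three_sq, show (n / √3 - 1 / √3 * (a + b) / 2) / (√2 / √3) =
    √2 / 2 * (n - (a + b) / 2) by field_simp; rw [sq_sqrt (by norm_num)]; ring] at key
  have hsqrt : √2 / 2 ≤ 1 := by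
    rw [div_le_one (by norm_num)]
    exact sqrt_le_iff.2 (by norm_num)
  linarith [mul_le_mul_of_nonneg_left hrem (show 0 ≤ √2 / 2 by positivity),
    mul_le_mul_of_nonneg_right hsqrt (sq_nonneg M), sq_nonneg M]

lemma dih_opposite_le :
    dih (4 + e₄) (4 + e₂) (4 + e₆) (8 - e₁) (4 + e₅) (4 + e₃) ≤
      arccos (-1 / 3) + √2 * (e₄ / 12 - e₁ / 8 - (e₂ + e₃ + e₅ + e₆) / 12) +
        13 / 100 * (e₁ + 2 * (e₂ + e₃ + e₄ + e₅ + e₆)) ^ 2 := by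
  set M := e₁ + 2 * (e₂ + e₃ + e₄ + e₅ + e₆) with hMdef
  have hM₀ : 0 ≤ M := by positivity
  set a := heron (4 + e₄) (4 + e₂) (4 + e₃) / 48 - 1 with ha
  set b := heron (4 + e₄) (4 + e₆) (4 + e₅) / 48 - 1 with hb
  set ν := cayleyMengerDeriv (4 + e₄) (4 + e₂) (4 + e₆) (8 - e₁) (4 + e₅) (4 + e₃) / 48 + 1 / 3
    with hν
  simp only [heron, cayleyMengerDeriv] at ha hb hν
  have hrem : -(M ^ 2 / 144) ≤
      ν - -1 / 3 * (a + b) / 2 + (e₄ / 9 - e₁ / 6 - (e₂ + e₃ + e₅ + e₆) / 9) := by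
    rw [← sub_nonneg, ha, hb, hν, hMdef]
    ring_nf
    positivity
  have key := dih_le (x₁ := 4 + e₄) (x₂ := 4 + e₂) (x₃ := 4 + e₆) (x₄ := 8 - e₁) (x₅ := 4 + e₅)
    (x₆ := 4 + e₃) (s := 48) (a := a) (b := b) (c := -1 / 3) (h := (1 / 6 + 1 / 1200) * M) (ν := ν)
    (by positivity) (by rw [cayleyMengerDeriv, hν]; ring) (by rw [heron, heron, ha, hb]; ring)
    (by linarith)
    (by apply abs_le_of_add_sq hM₀ hM <;> rw [ha, hMdef] <;> ring_nf <;> positivity)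
    (by apply abs_le_of_add_sq hM₀ hM <;> rw [hb, hMdef] <;> ring_nf <;> positivity)
    (by apply abs_le_of_add_sq hM₀ hM <;> rw [hν, hMdef] <;> ring_nf <;> positivity)
    (by rw [abs_le]; norm_num)
  rw [sqrt_one_sub_neg_third_sq, show (ν - -1 / 3 * (a + b) / 2) / (2 * √2 / 3) =
    3 / 4 * √2 * (ν - -1 / 3 * (a + b) / 2) by field_simp; rw [sq_sqrt (by norm_num)]; ring] at key
  have hsqrt : √2 ≤ 3 / 2 := sqrt_le_iff.2 (by norm_num)
  linarith [mul_le_mul_of_nonneg_left hrem (show 0 ≤ 3 / 4 * √2 by positivity),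
    mul_le_mul_of_nonneg_right hsqrt (sq_nonneg M), sq_nonneg M]

lemma dih_diagonal_le :
    dih (8 - e₁) (4 + e₂) (4 + e₃) (4 + e₄) (4 + e₅) (4 + e₆) ≤
      π / 2 - (e₁ + e₂ + e₃ - 2 * e₄ + e₅ + e₆) / 8 +
        1 / 10 * (e₁ + 2 * (e₂ + e₃ + e₄ + e₅ + e₆)) ^ 2 := by
  set M := e₁ + 2 * (e₂ + e₃ + e₄ + e₅ + e₆) with hMdef
  have hM₀ : 0 ≤ M := by positivity
  set a := heron (8 - e₁) (4 + e₂) (4 + e₆) / 64 - 1 with ha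
  set b := heron (8 - e₁) (4 + e₃) (4 + e₅) / 64 - 1 with hb
  set ν := cayleyMengerDeriv (8 - e₁) (4 + e₂) (4 + e₃) (4 + e₄) (4 + e₅) (4 + e₆) / 64 with hν
  simp only [heron, cayleyMengerDeriv] at ha hb hν
  have hrem : -(M ^ 2 / 64) ≤ ν - (e₁ + e₂ + e₃ - 2 * e₄ + e₅ + e₆) / 8 := by
    rw [← sub_nonneg, hν, hMdef]
    ring_nf
    positivity
  have key := dih_le (x₁ := 8 - e₁) (x₂ := 4 + e₂) (x₃ := 4 + e₃) (x₄ := 4 + e₄) (x₅ := 4 + e₅)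
    (x₆ := 4 + e₆) (s := 64) (a := a) (b := b) (c := 0) (h := (1 / 8 + 1 / 1200) * M) (ν := ν)
    (by positivity) (by rw [cayleyMengerDeriv, hν]; ring) (by rw [heron, heron, ha, hb]; ring)
    (by linarith)
    (by apply abs_le_of_add_sq hM₀ hM <;> rw [ha, hMdef] <;> ring_nf <;> positivity)
    (by apply abs_le_of_add_sq hM₀ hM <;> rw [hb, hMdef] <;> ring_nf <;> positivity)
    (by apply abs_le_of_add_sq hM₀ hM <;> rw [hν, hMdef] <;> ring_nf <;> positivity)
    (by norm_num)
  norm_num at key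
  linarith [sq_nonneg M]

end EdgeExpansion

section OctahedralConstant

lemma arccos_inv_sqrt_three_mem_Icc : arccos (1 / √3) ∈ Set.Icc (π / 4) (π / 2) := by
  refine ⟨?_, arccos_le_pi_div_two.2 (by positivity)⟩
  rw [← arccos_cos (by positivity : 0 ≤ π / 4) (by linarith [pi_pos]), cos_pi_div_four]
  refine arccos_le_arccos ?_
  rw [div_le_div_iff₀ (by positivity) two_pos, ← sqrt_mul zero_le_two]
  exact (le_sqrt' (by norm_num)).2 (by norm_num)

lemma cos_two_mul_arccos_inv_sqrt_three : cos (2 * arccos (1 / √3)) = -1 / 3 := by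
  have hle : 1 / √3 ≤ 1 := (div_le_one (by positivity)).2 (one_le_sqrt.2 (by norm_num))
  rw [cos_two_mul, cos_arccos (by linarith [show 0 ≤ 1 / √3 by positivity]) hle, div_pow,
    sq_sqrt (by norm_num)]
  norm_num

lemma arccos_neg_third : arccos (-1 / 3) = 2 * arccos (1 / √3) := by
  have ht := arccos_inv_sqrt_three_mem_Icc
  rw [← cos_two_mul_arccos_inv_sqrt_three, arccos_cos] <;> linarith [ht.1, ht.2, pi_pos]

lemma cos_four_mul_arccos_sub_pi : cos (4 * arccos (1 / √3) - π) = 7 / 9 := by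
  rw [cos_sub_pi, show 4 * arccos (1 / √3) = 2 * (2 * arccos (1 / √3)) by ring, cos_two_mul,
    cos_two_mul_arccos_inv_sqrt_three]
  norm_num

lemma four_mul_arccos_sub_pi_mem_Icc : 4 * arccos (1 / √3) - π ∈ Set.Icc (2 / 3) 1 := by
  have ht := arccos_inv_sqrt_three_mem_Icc
  have hcos := cos_four_mul_arccos_sub_pi
  constructor
  · nlinarith [one_sub_sq_div_two_le_cos (x := 4 * arccos (1 / √3) - π), ht.1]
  · by_contra! h
    have := cos_lt_cos_of_nonneg_of_le_pi zero_le_one (by linarith [ht.2]) h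
    linarith [cos_one_le]

lemma δoct_mul_sqrt (x : ℝ) :
    δoct * √(128 * x) = 12 * ((4 * arccos (1 / √3) - π) * √x) := by
  have h8 : √8 ≠ 0 := by positivity
  rw [δoct, show (128 : ℝ) * x = 4 ^ 2 * 8 * x by ring, sqrt_mul (by norm_num),
    sqrt_mul (by norm_num), sqrt_sq (by norm_num)]
  field_simp
  ring

end OctahedralConstant

section Compression

/-- The compression of a simplex whose unit balls at the vertices do not overlap and do not cross
the opposite faces, in terms of the squared edge lengths `x₁, …, x₆` of the edges
`01, 02, 03, 23, 13, 12`. -/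
def edgeCompression (x₁ x₂ x₃ x₄ x₅ x₆ : ℝ) : ℝ :=
  (2 * (dih x₁ x₂ x₃ x₄ x₅ x₆ + dih x₂ x₁ x₃ x₅ x₄ x₆ + dih x₃ x₁ x₂ x₆ x₄ x₅ +
    dih x₄ x₂ x₆ x₁ x₅ x₃ + dih x₅ x₁ x₆ x₂ x₄ x₃ + dih x₆ x₁ x₅ x₃ x₄ x₂) - 4 * π) / 3 -
    δoct * (√(cayleyMenger x₁ x₂ x₃ x₄ x₅ x₆) / 12)

lemma edgeCompression_S0 : edgeCompression 8 4 4 4 4 4 = 0 := by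
  have hadj : dih 4 8 4 4 4 4 = arccos (1 / √3) := by
    rw [dih, show heron 4 8 4 * heron 4 4 4 = 32 ^ 2 * 3 by norm_num [heron],
      show cayleyMengerDeriv 4 8 4 4 4 4 = 32 by norm_num [cayleyMengerDeriv],
      sqrt_mul (by norm_num), sqrt_sq (by norm_num), div_mul_eq_div_div, div_self (by norm_num)]
  have hopp : dih 4 4 4 8 4 4 = 2 * arccos (1 / √3) := by
    rw [dih, show heron 4 4 4 * heron 4 4 4 = 48 ^ 2 by norm_num [heron],
      show cayleyMengerDeriv 4 4 4 8 4 4 = -16 by norm_num [cayleyMengerDeriv],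
      sqrt_sq (by norm_num), ← arccos_neg_third]
    norm_num
  have hdiag : dih 8 4 4 4 4 4 = π / 2 := by
    rw [dih, show cayleyMengerDeriv 8 4 4 4 4 4 = 0 by norm_num [cayleyMengerDeriv], zero_div,
      arccos_zero]
  rw [edgeCompression, hadj, hopp, hdiag,
    show cayleyMenger 8 4 4 4 4 4 = 128 * 1 by norm_num [cayleyMenger], ← mul_div_assoc,
    δoct_mul_sqrt, sqrt_one]
  ring

variable {e₁ e₂ e₃ e₄ e₅ e₆ : ℝ} (h₁ : 0 ≤ e₁) (h₂ : 0 ≤ e₂) (h₃ : 0 ≤ e₃) (h₄ : 0 ≤ e₄)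
  (h₅ : 0 ≤ e₅) (h₆ : 0 ≤ e₆)
include h₁ h₂ h₃ h₄ h₅ h₆

lemma le_sqrt_cayleyMenger_div (hM : e₁ + 2 * (e₂ + e₃ + e₄ + e₅ + e₆) ≤ 1 / 20) :
    1 + e₁ / 16 + (e₂ + e₃ + e₅ + e₆) / 8 - 1 / 40 * (e₁ + 2 * (e₂ + e₃ + e₄ + e₅ + e₆)) ^ 2 ≤
      √(cayleyMenger (8 - e₁) (4 + e₂) (4 + e₃) (4 + e₄) (4 + e₅) (4 + e₆) / 128) := by
  set M := e₁ + 2 * (e₂ + e₃ + e₄ + e₅ + e₆) with hMdef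
  have hM₀ : 0 ≤ M := by positivity
  set z := cayleyMenger (8 - e₁) (4 + e₂) (4 + e₃) (4 + e₄) (4 + e₅) (4 + e₆) / 128 - 1 with hz
  have hlo : 0 ≤ z - (e₁ / 8 + (e₂ + e₃ + e₅ + e₆) / 4) + (M ^ 2 / 32 + M ^ 3 / 600) := by
    rw [hz, cayleyMenger, hMdef]
    ring_nf
    positivity
  have hhi : 0 ≤ M / 8 + M ^ 2 / 64 + M ^ 3 / 1200 - z := by
    rw [hz, cayleyMenger, hMdef]
    ring_nf
    positivity
  have hsq : M ^ 2 ≤ M / 20 := by linarith [mul_le_mul_of_nonneg_left hM hM₀]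
  have hcube : M ^ 3 ≤ M ^ 2 / 20 := by linarith [mul_le_mul_of_nonneg_left hM (sq_nonneg M)]
  have habs : |z| ≤ 13 / 100 * M := by
    rw [abs_le]
    constructor <;> linarith
  have hz₂ : z ^ 2 ≤ (13 / 100 * M) ^ 2 := sq_le_sq' (abs_le.1 habs).1 (abs_le.1 habs).2
  have hsqrt := one_add_half_sub_sq_le_sqrt (z := z) (by linarith [(abs_le.1 habs).1])
  rw [hz, add_sub_cancel, ← hz] at hsqrt
  linarith [sq_nonneg M]

lemma le_arccos_mul_sqrt_cayleyMenger_div (hM : e₁ + 2 * (e₂ + e₃ + e₄ + e₅ + e₆) ≤ 1 / 20) :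
    4 * arccos (1 / √3) - π + 2 / 3 * (e₁ / 16 + (e₂ + e₃ + e₅ + e₆) / 8) -
        1 / 40 * (e₁ + 2 * (e₂ + e₃ + e₄ + e₅ + e₆)) ^ 2 ≤
      (4 * arccos (1 / √3) - π) *
        √(cayleyMenger (8 - e₁) (4 + e₂) (4 + e₃) (4 + e₄) (4 + e₅) (4 + e₆) / 128) := by
  obtain ⟨hκ, hκ'⟩ := four_mul_arccos_sub_pi_mem_Icc
  have hlin : 0 ≤ e₁ / 16 + (e₂ + e₃ + e₅ + e₆) / 8 := by positivity
  have hvol := le_sqrt_cayleyMenger_div h₁ h₂ h₃ h₄ h₅ h₆ hM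
  set M := e₁ + 2 * (e₂ + e₃ + e₄ + e₅ + e₆)
  linarith [mul_le_mul_of_nonneg_left hvol (by linarith : 0 ≤ 4 * arccos (1 / √3) - π),
    mul_le_mul_of_nonneg_right hκ hlin, mul_le_mul_of_nonneg_right hκ' (sq_nonneg M)]

lemma edgeCompression_le (hb₁ : e₁ ≤ 57 / 10000) (hb : e₂ + e₃ + e₄ + e₅ + e₆ ≤ 41 / 2000) :
    edgeCompression (8 - e₁) (4 + e₂) (4 + e₃) (4 + e₄) (4 + e₅) (4 + e₆) ≤
      -(e₁ + e₂ + e₃ + e₄ + e₅ + e₆) / 1000 := by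
  have hM : e₁ + 2 * (e₂ + e₃ + e₄ + e₅ + e₆) ≤ 1 / 20 := by linarith
  have d₁ := dih_diagonal_le h₁ h₂ h₃ h₄ h₅ h₆ hM
  have d₂ := dih_adjacent_le h₁ h₂ h₃ h₄ h₅ h₆ hM
  have d₃ := dih_adjacent_le h₁ h₃ h₂ h₄ h₆ h₅ (by linarith)
  have d₄ := dih_opposite_le h₁ h₂ h₃ h₄ h₅ h₆ hM
  have d₅ := dih_adjacent_le h₁ h₅ h₆ h₄ h₂ h₃ (by linarith)
  have d₆ := dih_adjacent_le h₁ h₆ h₅ h₄ h₃ h₂ (by linarith)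
  rw [arccos_neg_third] at d₄
  set M := e₁ + 2 * (e₂ + e₃ + e₄ + e₅ + e₆) with hMdef
  rw [show e₁ + 2 * (e₃ + e₂ + e₄ + e₆ + e₅) = M by ring] at d₃
  rw [show e₁ + 2 * (e₅ + e₆ + e₄ + e₂ + e₃) = M by ring] at d₅
  rw [show e₁ + 2 * (e₆ + e₅ + e₄ + e₃ + e₂) = M by ring] at d₆
  have hM₂ : M ^ 2 ≤ 57 / 10000 * e₁ + 21 / 200 * (e₂ + e₃ + e₄ + e₅ + e₆) := by
    have hT : 0 ≤ e₂ + e₃ + e₄ + e₅ + e₆ := by positivity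
    linarith [mul_le_mul_of_nonneg_left hb₁ h₁, mul_le_mul_of_nonneg_left hb₁ hT,
      mul_le_mul_of_nonneg_left hb hT]
  have hκvol := le_arccos_mul_sqrt_cayleyMenger_div h₁ h₂ h₃ h₄ h₅ h₆ hM
  have hlin : √2 * (e₁ + e₂ + e₃ + e₅ + e₆ - 2 * e₄) ≤
      707 / 500 * (e₁ + e₂ + e₃ + e₅ + e₆ - 2 * e₄) +
        (e₁ + e₂ + e₃ + e₅ + e₆) / 1000 := by
    have hlo : 707 / 500 ≤ √2 := le_sqrt_of_sq_le (by norm_num)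
    have hhi : √2 ≤ 707 / 500 + 1 / 1000 := sqrt_le_iff.2 (by norm_num)
    have hsum : 0 ≤ e₁ + e₂ + e₃ + e₅ + e₆ := by positivity
    linarith [mul_le_mul_of_nonneg_right hhi hsum, mul_le_mul_of_nonneg_right hlo h₄]
  rw [edgeCompression, ← mul_div_assoc, ← mul_div_cancel₀ (cayleyMenger _ _ _ _ _ _)
    (show (128 : ℝ) ≠ 0 by norm_num), δoct_mul_sqrt]
  linarith

end Compression

section EdgeLengthBound

variable {y₁ y₂ y₃ y₄ y₅ y₆ : ℝ}

lemma sub_le_eight_sub_sq_and_le (h : y₁ ∈ Set.Icc (2 * √2 - 0.001) (2 * √2)) :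
    2 * √2 - y₁ ≤ 8 - y₁ ^ 2 ∧ 8 - y₁ ^ 2 ≤ 57 / 10000 := by
  have h₂ : √2 ^ 2 = 2 := sq_sqrt zero_le_two
  have hlo : 1 ≤ √2 := one_le_sqrt.2 one_le_two
  have hhi : √2 ≤ 71 / 50 := sqrt_le_iff.2 (by norm_num)
  have hfactor : 8 - y₁ ^ 2 = (2 * √2 - y₁) * (2 * √2 + y₁) := by linear_combination -4 * h₂
  obtain ⟨hy, hy'⟩ := h
  norm_num at hy
  constructor <;> rw [hfactor] <;> nlinarith

lemma sub_two_le_sq_sub_four_and_le (h : y₂ ∈ Set.Icc (2 : ℝ) 2.001) :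
    y₂ - 2 ≤ y₂ ^ 2 - 4 ∧ y₂ ^ 2 - 4 ≤ 41 / 10000 := by
  obtain ⟨hy, hy'⟩ := h
  norm_num at hy'
  constructor <;> nlinarith

lemma edgeCompression_sq_le (h₁ : y₁ ∈ Set.Icc (2 * √2 - 0.001) (2 * √2))
    (h₂ : y₂ ∈ Set.Icc (2 : ℝ) 2.001) (h₃ : y₃ ∈ Set.Icc (2 : ℝ) 2.001)
    (h₄ : y₄ ∈ Set.Icc (2 : ℝ) 2.001) (h₅ : y₅ ∈ Set.Icc (2 : ℝ) 2.001)
    (h₆ : y₆ ∈ Set.Icc (2 : ℝ) 2.001) :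
    edgeCompression (y₁ ^ 2) (y₂ ^ 2) (y₃ ^ 2) (y₄ ^ 2) (y₅ ^ 2) (y₆ ^ 2) ≤
      -((2 * √2 - y₁) + (y₂ - 2) + (y₃ - 2) + (y₄ - 2) + (y₅ - 2) + (y₆ - 2)) / 1000 := by
  have b₁ := sub_le_eight_sub_sq_and_le h₁
  have b₂ := sub_two_le_sq_sub_four_and_le h₂
  have b₃ := sub_two_le_sq_sub_four_and_le h₃
  have b₄ := sub_two_le_sq_sub_four_and_le h₄
  have b₅ := sub_two_le_sq_sub_four_and_le h₅
  have b₆ := sub_two_le_sq_sub_four_and_le h₆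
  have key := edgeCompression_le ((sub_nonneg.2 h₁.2).trans b₁.1) ((sub_nonneg.2 h₂.1).trans b₂.1)
    ((sub_nonneg.2 h₃.1).trans b₃.1) ((sub_nonneg.2 h₄.1).trans b₄.1)
    ((sub_nonneg.2 h₅.1).trans b₅.1) ((sub_nonneg.2 h₆.1).trans b₆.1) b₁.2 (by linarith)
  simp only [sub_sub_cancel, add_sub_cancel] at key
  linarith

end EdgeLengthBound

section Gamma

variable (b : AffineBasis (Fin 4) ℝ E3)

lemma Gamma_eq_inter_iUnion :
    Gamma (b 0) (b 1) (b 2) (b 3) =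
      volume.real (convexHull ℝ (Set.range b) ∩ ⋃ i, closedBall (b i) 1) -
        δoct * volume.real (convexHull ℝ (Set.range b)) := by
  have hrange : Set.range b = {b 0, b 1, b 2, b 3} := by
    ext x
    simp [Fin.exists_fin_succ, eq_comm]
  have hballs : ⋃ i, closedBall (b i) 1 =
      closedBall (b 0) 1 ∪ closedBall (b 1) 1 ∪ closedBall (b 2) 1 ∪ closedBall (b 3) 1 := by
    ext x
    simp [Fin.exists_fin_succ, or_assoc]
  rw [_root_.Gamma, hrange, hballs, measureReal_def, measureReal_def]
  ring

lemma edgeCompression_dist :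
    edgeCompression (dist (b 0) (b 1) ^ 2) (dist (b 0) (b 2) ^ 2) (dist (b 0) (b 3) ^ 2)
        (dist (b 2) (b 3) ^ 2) (dist (b 1) (b 3) ^ 2) (dist (b 1) (b 2) ^ 2) =
      ∑ i, volume.real (vertexSector b i) - δoct * volume.real (convexHull ℝ (Set.range b)) := by
  rw [sum_volume_real_vertexSector, volume_real_convexHull_eq_sqrt_cayleyMenger,
    dihedralAngle_eq_dih b (i := 2) (j := 3) (k := 0) (l := 1) (by decide),
    dihedralAngle_eq_dih b (i := 1) (j := 3) (k := 0) (l := 2) (by decide),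
    dihedralAngle_eq_dih b (i := 1) (j := 2) (k := 0) (l := 3) (by decide),
    dihedralAngle_eq_dih b (i := 0) (j := 3) (k := 1) (l := 2) (by decide),
    dihedralAngle_eq_dih b (i := 0) (j := 2) (k := 1) (l := 3) (by decide),
    dihedralAngle_eq_dih b (i := 0) (j := 1) (k := 2) (l := 3) (by decide), edgeCompression]
  simp only [dist_comm]
  ring

lemma Gamma_le_edgeCompression :
    Gamma (b 0) (b 1) (b 2) (b 3) ≤
      edgeCompression (dist (b 0) (b 1) ^ 2) (dist (b 0) (b 2) ^ 2) (dist (b 0) (b 3) ^ 2)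
        (dist (b 2) (b 3) ^ 2) (dist (b 1) (b 3) ^ 2) (dist (b 1) (b 2) ^ 2) := by
  rw [Gamma_eq_inter_iUnion, edgeCompression_dist]
  gcongr
  exact volume_real_convexHull_inter_balls_le b

lemma Gamma_eq_edgeCompression (hdist : Pairwise fun i j ↦ 2 ≤ dist (b i) (b j))
    (halt : ∀ i, ‖faceNormal b i‖ ≤ 1) :
    Gamma (b 0) (b 1) (b 2) (b 3) =
      edgeCompression (dist (b 0) (b 1) ^ 2) (dist (b 0) (b 2) ^ 2) (dist (b 0) (b 3) ^ 2)
        (dist (b 2) (b 3) ^ 2) (dist (b 1) (b 3) ^ 2) (dist (b 1) (b 2) ^ 2) := by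
  rw [Gamma_eq_inter_iUnion, edgeCompression_dist,
    volume_real_convexHull_inter_balls_eq b hdist halt]

variable {b}

lemma norm_faceNormal_le_one_of_heron_le {i j k l : Fin 4} (h : [i, j, k, l].Nodup)
    (hle : heron (dist (b i) (b j) ^ 2) (dist (b i) (b k) ^ 2) (dist (b j) (b k) ^ 2) ≤
      cayleyMenger (dist (b i) (b j) ^ 2) (dist (b i) (b k) ^ 2) (dist (b i) (b l) ^ 2)
        (dist (b k) (b l) ^ 2) (dist (b j) (b l) ^ 2) (dist (b j) (b k) ^ 2)) :
    ‖faceNormal b l‖ ≤ 1 := by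
  rw [← cayleyMenger_mul_norm_faceNormal_sq b h, mul_le_iff_le_one_right
    (cayleyMenger_dist_pos b h)] at hle
  exact (sq_le_one_iff₀ (norm_nonneg _)).1 hle

lemma Gamma_S0 (h₁ : dist (b 0) (b 1) = 2 * √2) (h₂ : dist (b 0) (b 2) = 2)
    (h₃ : dist (b 0) (b 3) = 2) (h₄ : dist (b 2) (b 3) = 2) (h₅ : dist (b 1) (b 3) = 2)
    (h₆ : dist (b 1) (b 2) = 2) : Gamma (b 0) (b 1) (b 2) (b 3) = 0 := by
  have hsq : (2 * √2) ^ 2 = 8 := by rw [mul_pow, sq_sqrt zero_le_two]; norm_num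
  have hd : ∀ i j, dist (b i) (b j) =
      !![0, 2 * √2, 2, 2; 2 * √2, 0, 2, 2; 2, 2, 0, 2; 2, 2, 2, 0] i j := by
    intro i j
    fin_cases i <;> fin_cases j <;> simp [h₁, h₂, h₃, h₄, h₅, h₆, dist_comm (b 1) (b 0),
      dist_comm (b 2), dist_comm (b 3)]
  have hdist : Pairwise fun i j ↦ 2 ≤ dist (b i) (b j) := by
    intro i j hij
    rw [hd]
    fin_cases i <;> fin_cases j <;> simp [one_le_sqrt] at hij ⊢
  have hd_sq : ∀ i j, dist (b i) (b j) ^ 2 =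
      !![0, 8, 4, 4; 8, 0, 4, 4; 4, 4, 0, 4; 4, 4, 4, 0] i j := by
    intro i j
    rw [hd]
    fin_cases i <;> fin_cases j <;> norm_num [hsq]
  have hequilateral : heron 4 4 4 ≤ cayleyMenger 4 4 8 4 4 4 := by
    norm_num [heron, cayleyMenger]
  have hright : heron 8 4 4 ≤ cayleyMenger 8 4 4 4 4 4 := by
    norm_num [heron, cayleyMenger]
  have halt : ∀ l, ‖faceNormal b l‖ ≤ 1 := by
    intro l
    fin_cases l
    · exact norm_faceNormal_le_one_of_heron_le (i := 1) (j := 2) (k := 3) (by decide)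
        (by simpa [hd_sq] using hequilateral)
    · exact norm_faceNormal_le_one_of_heron_le (i := 0) (j := 2) (k := 3) (by decide)
        (by simpa [hd_sq] using hequilateral)
    · exact norm_faceNormal_le_one_of_heron_le (i := 0) (j := 1) (k := 3) (by decide)
        (by simpa [hd_sq] using hright)
    · exact norm_faceNormal_le_one_of_heron_le (i := 0) (j := 1) (k := 2) (by decide)
        (by simpa [hd_sq] using hright)
  rw [Gamma_eq_edgeCompression b hdist halt, h₁, h₂, h₃, h₄, h₅, h₆, hsq]
  norm_num [edgeCompression_S0]

end Gamma

/-- Appendix: in the `0.001`-neighborhood of `S₀ = S(2√2,2,2,2,2,2)` one has `Γ(S) ≤ 0`,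
with equality exactly at `S₀`. -/
theorem compression_nonpos_near_S0 (p₀ p₁ p₂ p₃ : E3)
    (hindep : AffineIndependent ℝ ![p₀, p₁, p₂, p₃])
    (h1 : dist p₀ p₁ ∈ Set.Icc (2 * Real.sqrt 2 - 0.001) (2 * Real.sqrt 2))
    (h2 : dist p₀ p₂ ∈ Set.Icc (2 : ℝ) 2.001) (h3 : dist p₀ p₃ ∈ Set.Icc (2 : ℝ) 2.001)
    (h4 : dist p₂ p₃ ∈ Set.Icc (2 : ℝ) 2.001) (h5 : dist p₁ p₃ ∈ Set.Icc (2 : ℝ) 2.001)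
    (h6 : dist p₁ p₂ ∈ Set.Icc (2 : ℝ) 2.001) :
    Gamma p₀ p₁ p₂ p₃ ≤ 0 ∧
    (Gamma p₀ p₁ p₂ p₃ = 0 ↔
      (dist p₀ p₁ = 2 * Real.sqrt 2 ∧ dist p₀ p₂ = 2 ∧ dist p₀ p₃ = 2 ∧
        dist p₂ p₃ = 2 ∧ dist p₁ p₃ = 2 ∧ dist p₁ p₂ = 2)) := by
  obtain ⟨b, rfl, rfl, rfl, rfl⟩ : ∃ b : AffineBasis (Fin 4) ℝ E3,
      b 0 = p₀ ∧ b 1 = p₁ ∧ b 2 = p₂ ∧ b 3 = p₃ :=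
    ⟨⟨![p₀, p₁, p₂, p₃], hindep,
      hindep.affineSpan_eq_top_iff_card_eq_finrank_add_one.2 (by simp)⟩, rfl, rfl, rfl, rfl⟩
  have hle := (Gamma_le_edgeCompression b).trans (edgeCompression_sq_le h1 h2 h3 h4 h5 h6)
  rw [Set.mem_Icc] at h1 h2 h3 h4 h5 h6
  refine ⟨by linarith, fun h ↦ ?_, fun ⟨q₁, q₂, q₃, q₄, q₅, q₆⟩ ↦ Gamma_S0 q₁ q₂ q₃ q₄ q₅ q₆⟩
  rw [h] at hle
  refine ⟨?_, ?_, ?_, ?_, ?_, ?_⟩ <;> linarith
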